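/- arXiv:1801.09169 — 3 statements merged into one kernel-verified Lean document; each statement's English description precedes it below -/
import Mathlib

section
/- Let Λ = KQ/⟨all paths of length L+1⟩ be a truncated path algebra over an algebraically closed field K and d a dimension vector. Then for every realizable semisimple sequence S of dimension vector d, the subvariety Rep S of Rep_d(Λ) is irreducible. Moreover, every irreducible component of Rep_d(Λ) equals the Zariski closure of Rep S for some realizable S ∈ Seq(d). -/
open Finset

/-! # Varieties of representations of a quiver with relations: basic setup -/

/-- The Zariski topology on the affine space `ι → K`: it is generated by the basic open
sets `D(p) = {x | p(x) ≠ 0}`, where `p` ranges over multivariate polynomials. -/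
def zariskiTopology (ι K : Type) [CommSemiring K] : TopologicalSpace (ι → K) :=
  TopologicalSpace.generateFrom
    {U | ∃ p : MvPolynomial ι K, U = {x | MvPolynomial.eval x p ≠ 0}}

/-- A finite quiver `Q`: vertices `Fin n`, arrows `Fin numArrows` with source and
target maps. -/
structure QuiverData where
  n : ℕ
  numArrows : ℕ
  src : Fin numArrows → Fin n
  tgt : Fin numArrows → Fin n

namespace QuiverData

variable (Q : QuiverData) (d : Fin Q.n → ℕ) (K : Type) [Field K]

/-- Index of the coordinates of the affine space of `d`-dimensional representations:
for each arrow `a` a matrix entry index in `Fin (d (tgt a)) × Fin (d (src a))`. -/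
abbrev Coords := Σ a : Fin Q.numArrows, Fin (d (Q.tgt a)) × Fin (d (Q.src a))

/-- The affine space of `d`-dimensional representations of `Q`:
a point `x` assigns to each arrow `a` a `d (tgt a) × d (src a)` matrix over `K`. -/
abbrev RepSpace := Coords Q d → K

/-- `RepSpace` carries the Zariski topology. -/
noncomputable instance instRepTop : TopologicalSpace (RepSpace Q d K) :=
  zariskiTopology (Coords Q d) K

/-- The underlying `K`-vector space `⊕ᵢ K^{dᵢ}` of any `d`-dimensional representation. -/
abbrev Carrier := (Σ i : Fin Q.n, Fin (d i)) → K

/-- The projection onto the component of the `i`-th vertex (action of the primitive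
idempotent `eᵢ`). -/
def proj (i : Fin Q.n) : Carrier Q d K →ₗ[K] Carrier Q d K where
  toFun m := fun jv => if jv.1 = i then m jv else 0
  map_add' u v := by
    funext jv; by_cases h : jv.1 = i <;> simp [h]
  map_smul' c u := by
    funext jv; by_cases h : jv.1 = i <;> simp [h]

/-- The action of the arrow `a` on the carrier space of the representation `x`. -/
noncomputable def arrowMap (x : RepSpace Q d K) (a : Fin Q.numArrows) :
    Carrier Q d K →ₗ[K] Carrier Q d K where
  toFun m := fun jv =>
    if h : jv.1 = Q.tgt a then
      ∑ w : Fin (d (Q.src a)), x ⟨a, (Fin.cast (congrArg d h) jv.2, w)⟩ * m ⟨Q.src a, w⟩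
    else 0
  map_add' u v := by
    funext jv
    by_cases h : jv.1 = Q.tgt a <;> simp [h, mul_add, Finset.sum_add_distrib]
  map_smul' c u := by
    funext jv
    by_cases h : jv.1 = Q.tgt a <;>
      simp [h, Finset.mul_sum, mul_comm, mul_left_comm, mul_assoc]

/-- The action of a word `w = [a_k, …, a_1]` of arrows on the representation `x`
(the arrow `a_1` acts first; non-composable words act as `0`). -/
noncomputable def wordMap (x : RepSpace Q d K) (w : List (Fin Q.numArrows)) :
    Module.End K (Carrier Q d K) :=
  (w.map fun a => (arrowMap Q d K x a : Module.End K (Carrier Q d K))).prod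

/-- The submodule `J^l · M_x` of the module `M_x`: the sum of the images of all words of
arrows of length `l` (for an admissible ideal, the radical acts through the arrows). -/
noncomputable def radPow (x : RepSpace Q d K) (l : ℕ) : Submodule K (Carrier Q d K) :=
  ⨆ w : {w : List (Fin Q.numArrows) // w.length = l},
    LinearMap.range (wordMap Q d K x w.1)

/-- The socle series of `M_x`: `socPow x l = soc_l(M_x)`. -/
noncomputable def socPow (x : RepSpace Q d K) : ℕ → Submodule K (Carrier Q d K)
  | 0 => ⨅ a, LinearMap.ker (arrowMap Q d K x a)
  | (l+1) => ⨅ a, (socPow x l).comap (arrowMap Q d K x a)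

/-- The dimension, at the vertex `i`, of a (vertex-graded) subspace `N`. -/
noncomputable def vdim (N : Submodule K (Carrier Q d K)) (i : Fin Q.n) : ℕ :=
  Module.finrank K (N.map (proj Q d K i))

/-- The radical layering `S(M_x) = (M/JM, JM/J²M, …, J^L M/J^{L+1} M)` of the module `M_x`,
recorded through the dimension vectors of its semisimple layers. -/
noncomputable def radLayering (L : ℕ) (x : RepSpace Q d K) :
    Fin (L+1) → Fin Q.n → ℕ :=
  fun l i => vdim Q d K (radPow Q d K x l) i - vdim Q d K (radPow Q d K x (l+1)) i

/-- The socle layering `S*(M_x) = (soc₀M, soc₁M/soc₀M, …)` of the module `M_x`, recorded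
through the dimension vectors of its semisimple layers. -/
noncomputable def socLayering (L : ℕ) (x : RepSpace Q d K) :
    Fin (L+1) → Fin Q.n → ℕ :=
  fun l i => vdim Q d K (socPow Q d K x l) i -
    (if (l : ℕ) = 0 then 0 else vdim Q d K (socPow Q d K x ((l : ℕ) - 1)) i)

end QuiverData

/-- The dominance order on semisimple sequences (recorded as sequences of dimension
vectors): `dominates S S'` means `S ≤ S'`, i.e. `⊕_{j≤l} S_j ⊆ ⊕_{j≤l} S'_j` for all `l`. -/
def dominates {n L : ℕ} (S S' : Fin (L+1) → Fin n → ℕ) : Prop :=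
  ∀ (l : Fin (L+1)) (i : Fin n),
    ∑ j ∈ Finset.univ.filter (fun j => j ≤ l), S j i ≤
      ∑ j ∈ Finset.univ.filter (fun j => j ≤ l), S' j i

/-- A semisimple sequence has dimension vector `d` if its layers' dimension vectors sum
to `d`. -/
def hasDimVec {n L : ℕ} (S : Fin (L+1) → Fin n → ℕ) (d : Fin n → ℕ) : Prop :=
  ∀ i, ∑ l, S l i = d i

namespace QuiverData

variable (Q : QuiverData) (d : Fin Q.n → ℕ) (K : Type) [Field K]

/-- Evaluation of a formal noncommutative polynomial in the vertices (`Sum.inl`) and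
arrows (`Sum.inr`) of `Q` on the representation `x`; an element of the path algebra `KQ`
is represented by such a polynomial. -/
noncomputable def evalRel (x : RepSpace Q d K) :
    FreeAlgebra K (Fin Q.n ⊕ Fin Q.numArrows) →ₐ[K] Module.End K (Carrier Q d K) :=
  FreeAlgebra.lift K
    (Sum.elim (fun i => (proj Q d K i : Module.End K (Carrier Q d K)))
      (fun a => (arrowMap Q d K x a : Module.End K (Carrier Q d K))))

/-- The affine variety `Rep_d(Λ)` for `Λ = KQ/I`, where the ideal `I` is generated by the
set `R` of relations: the set of points of `RepSpace` annihilating every relation. -/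
def RepVar (R : Set (FreeAlgebra K (Fin Q.n ⊕ Fin Q.numArrows))) :
    Set (RepSpace Q d K) :=
  {x | ∀ r ∈ R, evalRel Q d K x r = 0}

/-- The affine variety `Rep_d(Λ)` for the truncated path algebra
`Λ = KQ/⟨all paths of length L+1⟩`. -/
def TruncRepVar (L : ℕ) : Set (RepSpace Q d K) :=
  {x | ∀ w : List (Fin Q.numArrows), w.length = L + 1 → wordMap Q d K x w = 0}

/-- A submodule of `M_x`, i.e. a subspace stable under the arrows and the vertex
idempotents. -/
def Stable (x : RepSpace Q d K) (N : Submodule K (Carrier Q d K)) : Prop :=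
  (∀ a, N.map (arrowMap Q d K x a) ≤ N) ∧ ∀ i, N.map (proj Q d K i) ≤ N

/-- A submodule `N` of `M_x` is indecomposable (as a module). -/
def IndecompSub (x : RepSpace Q d K) (N : Submodule K (Carrier Q d K)) : Prop :=
  N ≠ ⊥ ∧ ∀ N₁ N₂ : Submodule K (Carrier Q d K),
    Stable Q d K x N₁ → Stable Q d K x N₂ → N₁ ≤ N → N₂ ≤ N →
    N₁ ⊔ N₂ = N → N₁ ⊓ N₂ = ⊥ → N₁ = ⊥ ∨ N₂ = ⊥

/-- The module `M_x` is indecomposable. -/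
def IndecompRep (x : RepSpace Q d K) : Prop :=
  IndecompSub Q d K x ⊤

/-- The module `M_x` is uniserial: its submodules form a chain. -/
def UniserialRep (x : RepSpace Q d K) : Prop :=
  ∀ N₁ N₂ : Submodule K (Carrier Q d K),
    Stable Q d K x N₁ → Stable Q d K x N₂ → N₁ ≤ N₂ ∨ N₂ ≤ N₁

/-- `M_x` decomposes as a direct sum of `s` indecomposable submodules whose dimension
vectors are `D 0, …, D (s-1)`. -/
def DecompWith (x : RepSpace Q d K) (s : ℕ) (D : Fin s → Fin Q.n → ℕ) : Prop :=
  ∃ N : Fin s → Submodule K (Carrier Q d K),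
    (∀ r, Stable Q d K x (N r)) ∧
    (∀ r, Disjoint (N r) (⨆ t, ⨆ (_ : t ≠ r), N t)) ∧
    (⨆ r, N r) = ⊤ ∧
    (∀ r, IndecompSub Q d K x (N r)) ∧
    ∀ r i, vdim Q d K (N r) i = D r i

/-- A homomorphism of representations `M_x → M_y` (for possibly different dimension
vectors): a linear map commuting with the arrow actions and the vertex projections. -/
def RepHom (dx dy : Fin Q.n → ℕ) (x : RepSpace Q dx K) (y : RepSpace Q dy K)
    (φ : Carrier Q dx K →ₗ[K] Carrier Q dy K) : Prop :=
  (∀ a, φ ∘ₗ arrowMap Q dx K x a = arrowMap Q dy K y a ∘ₗ φ) ∧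
  ∀ i, φ ∘ₗ proj Q dx K i = proj Q dy K i ∘ₗ φ

/-- The submodule `N` of `M_x` is isomorphic, as a representation, to `M_y`. -/
def SubrepIso (dy : Fin Q.n → ℕ) (x : RepSpace Q d K)
    (N : Submodule K (Carrier Q d K)) (y : RepSpace Q dy K) : Prop :=
  ∃ φ : Carrier Q d K →ₗ[K] Carrier Q dy K,
    N ⊓ LinearMap.ker φ = ⊥ ∧ N.map φ = ⊤ ∧
    (∀ a, ∀ m ∈ N, φ (arrowMap Q d K x a m) = arrowMap Q dy K y a (φ m)) ∧
    (∀ i, ∀ m ∈ N, φ (proj Q d K i m) = proj Q dy K i (φ m))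

/-- The representations `M_x` and `M_y` are isomorphic; the isomorphism classes are
exactly the orbits of the `GL(d)`-action. -/
def IsoRep (x y : RepSpace Q d K) : Prop :=
  ∃ φ : Carrier Q d K ≃ₗ[K] Carrier Q d K,
    (∀ a m, φ (arrowMap Q d K x a m) = arrowMap Q d K y a (φ m)) ∧
    ∀ i m, φ (proj Q d K i m) = proj Q d K i (φ m)

/-- The `GL(d)`-orbit of the point `x`, i.e. the set of points encoding modules
isomorphic to `M_x`. -/
def orbitSet (x : RepSpace Q d K) : Set (RepSpace Q d K) :=
  {y | IsoRep Q d K x y}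

/-- Given a family `P` of varieties `Rep_dv(Λ)` (one for every dimension vector `dv`),
`Ext¹_Λ(M_x, M_y) = 0`: every extension `0 → M_y → E → M_x → 0` of `Λ`-modules splits. -/
def Ext1Zero (P : ∀ dv : Fin Q.n → ℕ, Set (RepSpace Q dv K))
    (dx dy : Fin Q.n → ℕ) (x : RepSpace Q dx K) (y : RepSpace Q dy K) : Prop :=
  ∀ z ∈ P (fun i => dx i + dy i),
    ∀ (ι : Carrier Q dy K →ₗ[K] Carrier Q (fun i => dx i + dy i) K)
      (π : Carrier Q (fun i => dx i + dy i) K →ₗ[K] Carrier Q dx K),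
      RepHom Q K dy (fun i => dx i + dy i) y z ι →
      RepHom Q K (fun i => dx i + dy i) dx z x π →
      Function.Injective ι → Function.Surjective π →
      LinearMap.ker π = LinearMap.range ι →
      ∃ σ : Carrier Q dx K →ₗ[K] Carrier Q (fun i => dx i + dy i) K,
        RepHom Q K dx (fun i => dx i + dy i) x z σ ∧ π ∘ₗ σ = LinearMap.id

/-- The direct sum `C₁ ⊕ ⋯ ⊕ C_s` of subvarieties `C_r ⊆ Rep_{D r}(Λ)`: the set of
points `x ∈ Rep_d(Λ)` whose module decomposes as `M_x ≅ ⊕_r M^{(r)}` with `M^{(r)}`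
encoded by a point of `C_r`. -/
def DirectSumSet (s : ℕ) (D : Fin s → Fin Q.n → ℕ)
    (Cs : ∀ r : Fin s, Set (RepSpace Q (D r) K)) : Set (RepSpace Q d K) :=
  {x | ∃ N : Fin s → Submodule K (Carrier Q d K),
    (∀ r, Stable Q d K x (N r)) ∧
    (∀ r, Disjoint (N r) (⨆ t, ⨆ (_ : t ≠ r), N t)) ∧
    (⨆ r, N r) = ⊤ ∧
    ∀ r, ∃ y ∈ Cs r, SubrepIso Q d K (D r) x (N r) y}

/-- The endomorphism space `End_Λ(M_x)` of the module `M_x`. -/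
def endSpace (x : RepSpace Q d K) :
    Submodule K (Carrier Q d K →ₗ[K] Carrier Q d K) where
  carrier := {φ | RepHom Q K d d x x φ}
  add_mem' := by
    intro φ ψ hφ hψ
    exact ⟨fun a => by rw [LinearMap.add_comp, LinearMap.comp_add, hφ.1 a, hψ.1 a],
      fun i => by rw [LinearMap.add_comp, LinearMap.comp_add, hφ.2 i, hψ.2 i]⟩
  zero_mem' := by
    exact ⟨fun a => by simp, fun i => by simp⟩
  smul_mem' := by
    intro c φ hφ
    exact ⟨fun a => by rw [LinearMap.smul_comp, LinearMap.comp_smul, hφ.1 a],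
      fun i => by rw [LinearMap.smul_comp, LinearMap.comp_smul, hφ.2 i]⟩

/-- A word of arrows is a (composable) path when read in function-composition order. -/
def IsPathWord (w : List (Fin Q.numArrows)) : Prop :=
  List.Chain' (fun a b => Q.src a = Q.tgt b) w

/-- The quiver `Q` has no oriented cycles. -/
def Acyclic : Prop :=
  ∀ (a : Fin Q.numArrows) (w : List (Fin Q.numArrows)),
    IsPathWord Q (a :: w) →
      Q.tgt a ≠ Q.src ((a :: w).getLast (List.cons_ne_nil a w))

/-- A filtration `M_x = F 0 ⊇ F 1 ⊇ ⋯ ⊇ F (L+1) = 0` by submodules which is governed by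
the semisimple sequence `S`: each layer `F l / F (l+1)` is semisimple, isomorphic to `S l`. -/
def Governed (L : ℕ) (x : RepSpace Q d K) (S : Fin (L+1) → Fin Q.n → ℕ)
    (F : Fin (L+2) → Submodule K (Carrier Q d K)) : Prop :=
  F 0 = ⊤ ∧ F (Fin.last (L+1)) = ⊥ ∧
  (∀ l : Fin (L+1), F l.succ ≤ F l.castSucc) ∧
  (∀ (l : Fin (L+2)) (i : Fin Q.n), (F l).map (proj Q d K i) ≤ F l) ∧
  (∀ (l : Fin (L+1)) (a : Fin Q.numArrows),
      (F l.castSucc).map (arrowMap Q d K x a) ≤ F l.succ) ∧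
  ∀ (l : Fin (L+1)) (i : Fin Q.n),
      vdim Q d K (F l.castSucc) i = S l i + vdim Q d K (F l.succ) i

/-- `Filt S`: the set of points whose module has a filtration governed by `S`. -/
def FiltSet (L : ℕ) (S : Fin (L+1) → Fin Q.n → ℕ) : Set (RepSpace Q d K) :=
  {x | ∃ F, Governed Q d K L x S F}

/-- `Γ(M_x)`: the number of semisimple sequences which are realizable (i.e. occur as the
radical layering of a module in the variety `P`) and which govern some filtration of `M_x`. -/
noncomputable def gammaCount (L : ℕ) (P : Set (RepSpace Q d K))
    (x : RepSpace Q d K) : ℕ :=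
  Set.ncard {S : Fin (L+1) → Fin Q.n → ℕ |
    (∃ y ∈ P, radLayering Q d K L y = S) ∧ ∃ F, Governed Q d K L x S F}

/-- `Sstar` is the generic (= minimal, attained) socle layering of the modules in `W`. -/
def GenSoc (L : ℕ) (W : Set (RepSpace Q d K))
    (Sstar : Fin (L+1) → Fin Q.n → ℕ) : Prop :=
  (∀ x ∈ W, dominates Sstar (socLayering Q d K L x)) ∧
  ∃ x ∈ W, socLayering Q d K L x = Sstar

end QuiverData

namespace QuiverData

variable (Q : QuiverData)

/-- The `i`-th entry of the row vector `e·A` (over `ℤ`), where `A` is the adjacency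
matrix of `Q`: the sum of `e (src a)` over all arrows `a` ending at `i`. -/
def inflowZ (e : Fin Q.n → ℤ) (i : Fin Q.n) : ℤ :=
  ∑ a ∈ Finset.univ.filter (fun a => Q.tgt a = i), e (Q.src a)

/-- The `i`-th entry of the row vector `e·B` (over `ℤ`), where `B` is the transpose of
the adjacency matrix of `Q`. -/
def outflowZ (e : Fin Q.n → ℤ) (i : Fin Q.n) : ℤ :=
  ∑ a ∈ Finset.univ.filter (fun a => Q.src a = i), e (Q.tgt a)

/-- Partial sums `t⁽⁰⁾ + ⋯ + t⁽ˡ⁾` of the recursion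
`t⁽⁰⁾ = sup{0, d − d·A}`, `t⁽ˡ⁺¹⁾ = sup{0, (d − ∑_{k≤l} t⁽ᵏ⁾) − (d − ∑_{k≤l} t⁽ᵏ⁾)·A}`
(computed componentwise). -/
def cumLayer (dz : Fin Q.n → ℤ) : ℕ → Fin Q.n → ℤ
  | 0 => fun i => max 0 (dz i - inflowZ Q dz i)
  | (l+1) => fun i =>
      cumLayer dz l i +
        max 0 ((dz i - cumLayer dz l i) -
          inflowZ Q (fun j => dz j - cumLayer dz l j) i)

/-- The positive part `∑ᵢ eᵢ fᵢ` of the Euler form of `Q`. -/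
def eulerHomPart (e f : Fin Q.n → ℕ) : ℕ := ∑ i, e i * f i

/-- The negative part `∑_{α} e_{src α} f_{tgt α}` of the Euler form of `Q`, so that
`⟨e, f⟩ = eulerHomPart e f − eulerExtPart e f`. -/
def eulerExtPart (e f : Fin Q.n → ℕ) : ℕ :=
  ∑ a, e (Q.src a) * f (Q.tgt a)

end QuiverData

/-- The quiver with a single vertex and `r` loops. -/
def QuiverData.loopQuiver (r : ℕ) : QuiverData :=
  ⟨1, r, fun _ => 0, fun _ => 0⟩

namespace QuiverData

variable (Q : QuiverData) (d : Fin Q.n → ℕ) (K : Type) [Field K]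

/-- The variety `Rep_d(Λ)` for `Λ = KQ/⟨Rels⟩`, regarded as a topological space with the
(subspace) Zariski topology. -/
abbrev GenV (Rels : Set (FreeAlgebra K (Fin Q.n ⊕ Fin Q.numArrows))) :=
  {y : RepSpace Q d K // y ∈ RepVar Q d K Rels}

/-- The variety `Rep_d(Λ)` for the truncated path algebra
`Λ = KQ/⟨paths of length L+1⟩`, regarded as a topological space. -/
abbrev TruncV (L : ℕ) := {y : RepSpace Q d K // y ∈ TruncRepVar Q d K L}

end QuiverData


namespace HW

theorem extend_equiv {K V W : Type} [Field K] [AddCommGroup V] [Module K V] [AddCommGroup W]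
    [Module K W] [FiniteDimensional K V] [FiniteDimensional K W]
    (A : Submodule K V) (B : Submodule K W) (e : A ≃ₗ[K] B)
    (h : Module.finrank K V = Module.finrank K W) :
    ∃ e' : V ≃ₗ[K] W, ∀ v : A, e' v = e v := by
  obtain ⟨C, hC⟩ := A.exists_isCompl
  obtain ⟨D, hD⟩ := B.exists_isCompl
  have h1 := Submodule.finrank_add_eq_of_isCompl hC
  have h2 := Submodule.finrank_add_eq_of_isCompl hD
  have h3 := e.finrank_eq
  have h4 : Module.finrank K C = Module.finrank K D := by omega
  let f : C ≃ₗ[K] D := LinearEquiv.ofFinrankEq _ _ h4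
  refine ⟨(Submodule.prodEquivOfIsCompl A C hC).symm ≪≫ₗ (e.prodCongr f) ≪≫ₗ
    Submodule.prodEquivOfIsCompl B D hD, fun v => ?_⟩
  simp

theorem flag_equiv {K : Type} [Field K] (N : ℕ) : ∀ (V W : Type) [AddCommGroup V] [Module K V]
    [AddCommGroup W] [Module K W] [FiniteDimensional K V] [FiniteDimensional K W]
    (F : ℕ → Submodule K V) (G : ℕ → Submodule K W), Antitone F → Antitone G →
    (∀ l, Module.finrank K (F l) = Module.finrank K (G l)) →
    F N = ⊥ → G N = ⊥ → Module.finrank K V = Module.finrank K W →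
    ∃ e : V ≃ₗ[K] W, ∀ l v, v ∈ F l ↔ e v ∈ G l := by
  induction N with
  | zero =>
    intro V W _ _ _ _ _ _ F G hF hG _ hF0 hG0 h
    refine ⟨LinearEquiv.ofFinrankEq _ _ h, fun l v => ?_⟩
    have h1 : F l = ⊥ := eq_bot_iff.2 (hF0 ▸ hF (Nat.zero_le l))
    have h2 : G l = ⊥ := eq_bot_iff.2 (hG0 ▸ hG (Nat.zero_le l))
    simp [h1, h2]
  | succ N ih =>
    intro V W _ _ _ _ _ _ F G hF hG hFG hFN hGN h
    obtain ⟨e, he⟩ := ih (F 0) (G 0) (fun l => (F (l+1)).comap (F 0).subtype)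
      (fun l => (G (l+1)).comap (G 0).subtype)
      (fun a b hab => Submodule.comap_mono (hF (by omega)))
      (fun a b hab => Submodule.comap_mono (hG (by omega)))
      (fun l => by
        rw [(Submodule.comapSubtypeEquivOfLe (hF (Nat.zero_le (l+1)))).finrank_eq,
          (Submodule.comapSubtypeEquivOfLe (hG (Nat.zero_le (l+1)))).finrank_eq, hFG])
      (by simp [hFN])
      (by simp [hGN])
      (hFG 0)
    obtain ⟨e', he'⟩ := extend_equiv (F 0) (G 0) e h
    have key : ∀ v, v ∈ F 0 ↔ e' v ∈ G 0 := by
      intro v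
      constructor
      · intro hv
        have := he' ⟨v, hv⟩
        simp only at this
        rw [this]; exact (e ⟨v, hv⟩).2
      · intro hv
        have := he' (e.symm ⟨e' v, hv⟩)
        simp only [LinearEquiv.apply_symm_apply] at this
        have := e'.injective this
        rw [← this]; exact (e.symm ⟨e' v, hv⟩).2
    refine ⟨e', fun l v => ?_⟩
    cases l with
    | zero => exact key v
    | succ l =>
      by_cases hv : v ∈ F 0
      · have h1 := he l ⟨v, hv⟩
        have h2 := he' ⟨v, hv⟩
        simp only [Submodule.mem_comap, Submodule.subtype_apply] at h1 h2
        rw [h2]; exact h1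
      · have hv' : e' v ∉ G 0 := fun h => hv ((key v).2 h)
        exact ⟨fun h => absurd (hF (Nat.zero_le _) h) hv,
          fun h => absurd (hG (Nat.zero_le _) h) hv'⟩

open Polynomial in
theorem generic_indep {K κ I : Type} [Field K] [Fintype κ] [DecidableEq κ] [Fintype I]
    [DecidableEq I]
    (v : κ → I → K[X]) (t0 : K)
    (h : LinearIndependent K (fun k i => (v k i).eval t0)) :
    ∃ P : K[X], P ≠ 0 ∧ ∀ t, P.eval t ≠ 0 →
      LinearIndependent K (fun k i => (v k i).eval t) := by
  let A : K → Matrix κ I K := fun t => Matrix.of fun k i => (v k i).eval t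
  have hA : LinearIndependent K (A t0).row := h
  rw [← Matrix.vecMul_injective_iff] at hA
  obtain ⟨g, hg⟩ := LinearMap.exists_leftInverse_of_injective (A t0).vecMulLinear
    (LinearMap.ker_eq_bot.2 hA)
  let B : Matrix I κ K := Matrix.of fun i => g (Pi.single i 1)
  have hB : ∀ u, Matrix.vecMul u B = g u := by
    intro u
    have : (Matrix.vecMulLinear B) = g := by
      apply LinearMap.pi_ext'
      intro i
      ext j
      simp [B]
    rw [← this]; rfl
  have hAB : A t0 * B = 1 := by
    apply Matrix.ext_iff_vecMul.2
    intro u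
    rw [← Matrix.vecMul_vecMul, hB, Matrix.vecMul_one]
    exact congrArg (fun f => f u) hg
  let M : Matrix κ κ K[X] := (Matrix.of v) * B.map C
  have hM : ∀ t, (M.det).eval t = (A t * B).det := by
    intro t
    rw [← coe_evalRingHom, RingHom.map_det]
    congr 1
    ext i j
    simp [M, A, Matrix.mul_apply, eval_finsetSum]
  refine ⟨M.det, fun h0 => ?_, fun t ht => ?_⟩
  · have := hM t0
    rw [h0, hAB] at this
    simp at this
  · rw [hM] at ht
    have : LinearIndependent K (A t).row := by
      rw [← Matrix.vecMul_injective_iff]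
      have : Function.Injective (A t).vecMulLinear := by
        rw [injective_iff_map_eq_zero]
        intro u hu
        apply Matrix.eq_zero_of_vecMul_eq_zero ht
        rw [← Matrix.vecMul_vecMul]
        have hu' : Matrix.vecMul u (A t) = 0 := hu
        rw [hu', Matrix.zero_vecMul]
      exact this
    exact this

theorem zariski_basis {ι K : Type} [Field K] (U : Set (ι → K))
    (hU : @IsOpen _ (zariskiTopology ι K) U) (x : ι → K) (hx : x ∈ U) :
    ∃ p : MvPolynomial ι K, MvPolynomial.eval x p ≠ 0 ∧
      ∀ y, MvPolynomial.eval y p ≠ 0 → y ∈ U := by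
  induction hU with
  | basic s hs =>
    obtain ⟨p, rfl⟩ := hs
    exact ⟨p, hx, fun y hy => hy⟩
  | univ => exact ⟨1, by simp, fun _ _ => trivial⟩
  | inter s t _ _ h1 h2 =>
    obtain ⟨p, hp, hp'⟩ := h1 hx.1
    obtain ⟨q, hq, hq'⟩ := h2 hx.2
    refine ⟨p * q, by simp [hp, hq], fun y hy => ?_⟩
    simp only [map_mul, ne_eq, mul_eq_zero, not_or] at hy
    exact ⟨hp' y hy.1, hq' y hy.2⟩
  | sUnion S _ ih =>
    obtain ⟨s, hs, hxs⟩ := hx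
    obtain ⟨p, hp, hp'⟩ := ih s hs hxs
    exact ⟨p, hp, fun y hy => ⟨s, hs, hp' y hy⟩⟩


section Reps

open QuiverData Matrix

variable {Q : QuiverData} {d : Fin Q.n → ℕ}

/-- Index set of the carrier. -/
abbrev Idx (Q : QuiverData) (d : Fin Q.n → ℕ) := Σ i : Fin Q.n, Fin (d i)

/-- Matrix of an arrow over a ring. -/
def arrMat {R : Type} [CommRing R] (x : Coords Q d → R) (a : Fin Q.numArrows) :
    Matrix (Idx Q d) (Idx Q d) R := Matrix.of fun p q =>
  if h : p.1 = Q.tgt a then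
    if h' : q.1 = Q.src a then
      x ⟨a, (Fin.cast (congrArg d h) p.2, Fin.cast (congrArg d h') q.2)⟩ else 0 else 0

/-- Coordinates of a family of matrices. -/
def coordOf {R : Type} (M : Fin Q.numArrows → Matrix (Idx Q d) (Idx Q d) R) : Coords Q d → R :=
  fun c => M c.1 ⟨Q.tgt c.1, c.2.1⟩ ⟨Q.src c.1, c.2.2⟩

/-- Projection matrix. -/
def projMat (R : Type) [CommRing R] (i : Fin Q.n) : Matrix (Idx Q d) (Idx Q d) R :=
  Matrix.diagonal fun p => if p.1 = i then 1 else 0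

theorem coordOf_arrMat {R : Type} [CommRing R] (x : Coords Q d → R) :
    coordOf (arrMat x) = x := by
  funext c
  simp [coordOf, arrMat]

theorem arrMat_coordOf {R : Type} [CommRing R]
    (M : Fin Q.numArrows → Matrix (Idx Q d) (Idx Q d) R) (a : Fin Q.numArrows)
    (h1 : projMat R (Q.tgt a) * M a = M a) (h2 : M a * projMat R (Q.src a) = M a) :
    arrMat (coordOf M) a = M a := by
  ext p q
  by_cases hp : p.1 = Q.tgt a
  · by_cases hq : q.1 = Q.src a
    · obtain ⟨p1, p2⟩ := p
      obtain ⟨q1, q2⟩ := q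
      simp only at hp hq
      subst hp hq
      simp [arrMat, coordOf]
    · rw [← h2]
      simp [arrMat, projMat, Matrix.mul_diagonal, hq]
  · rw [← h1]
    simp [arrMat, projMat, Matrix.diagonal_mul, hp]

theorem proj_arrMat {R : Type} [CommRing R] (x : Coords Q d → R) (a : Fin Q.numArrows) :
    projMat R (Q.tgt a) * arrMat x a = arrMat x a := by
  ext p q
  by_cases hp : p.1 = Q.tgt a <;> simp [arrMat, projMat, Matrix.diagonal_mul, hp]

theorem arrMat_proj {R : Type} [CommRing R] (x : Coords Q d → R) (a : Fin Q.numArrows) :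
    arrMat x a * projMat R (Q.src a) = arrMat x a := by
  ext p q
  by_cases hp : q.1 = Q.src a <;> simp [arrMat, projMat, Matrix.mul_diagonal, hp]

variable {K : Type} [Field K]

theorem arrowMap_eq (x : RepSpace Q d K) (a : Fin Q.numArrows) :
    arrowMap Q d K x a = Matrix.toLin' (arrMat x a) := by
  apply LinearMap.ext
  intro m
  funext p
  rw [Matrix.toLin'_apply]
  simp only [arrowMap, LinearMap.coe_mk, AddHom.coe_mk, Matrix.mulVec, dotProduct]
  by_cases hp : p.1 = Q.tgt a
  · rw [Fintype.sum_sigma, Finset.sum_eq_single (Q.src a)]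
    · simp [arrMat, hp]
    · intro b _ hb
      simp [arrMat, hp, hb]
    · simp
  · simp [arrMat, hp]

theorem proj_eq (i : Fin Q.n) : proj Q d K i = Matrix.toLin' (projMat K i) := by
  apply LinearMap.ext
  intro m
  funext p
  rw [Matrix.toLin'_apply]
  by_cases hp : p.1 = i <;> simp [proj, projMat, Matrix.mulVec_diagonal, hp]

theorem wordMap_cons (x : RepSpace Q d K) (a : Fin Q.numArrows) (w : List (Fin Q.numArrows)) :
    wordMap Q d K x (a :: w) = arrowMap Q d K x a * wordMap Q d K x w := by
  simp [wordMap]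

theorem wordMap_append (x : RepSpace Q d K) (w w' : List (Fin Q.numArrows)) :
    wordMap Q d K x (w ++ w') = wordMap Q d K x w * wordMap Q d K x w' := by
  simp [wordMap]

theorem wordMap_mem_radPow (x : RepSpace Q d K) (w : List (Fin Q.numArrows))
    (v : Carrier Q d K) : wordMap Q d K x w v ∈ radPow Q d K x w.length :=
  Submodule.mem_iSup_of_mem (⟨w, rfl⟩ : {w' : List (Fin Q.numArrows) // w'.length = w.length})
    (LinearMap.mem_range_self _ v)

theorem radPow_le_iff (x : RepSpace Q d K) (l : ℕ) (N : Submodule K (Carrier Q d K)) :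
    radPow Q d K x l ≤ N ↔
      ∀ w : List (Fin Q.numArrows), w.length = l → ∀ v, wordMap Q d K x w v ∈ N := by
  rw [radPow, iSup_le_iff]
  constructor
  · intro h w hw v
    exact h ⟨w, hw⟩ (LinearMap.mem_range_self _ v)
  · rintro h ⟨w, hw⟩ _ ⟨v, rfl⟩
    exact h w hw v

theorem radPow_zero (x : RepSpace Q d K) : radPow Q d K x 0 = ⊤ := by
  rw [eq_top_iff]
  intro v _
  have := wordMap_mem_radPow x [] v
  simpa [wordMap] using this

theorem radPow_antitone (x : RepSpace Q d K) : Antitone (radPow Q d K x) := by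
  apply antitone_nat_of_succ_le
  intro l
  rw [radPow_le_iff]
  intro w hw v
  have h : w = w.take l ++ w.drop l := (List.take_append_drop l w).symm
  rw [h, wordMap_append]
  have := wordMap_mem_radPow x (w.take l) (wordMap Q d K x (w.drop l) v)
  rwa [List.length_take, hw, Nat.min_eq_left (Nat.le_succ l)] at this

theorem arrow_radPow (x : RepSpace Q d K) (a : Fin Q.numArrows) (l : ℕ) (v : Carrier Q d K)
    (hv : v ∈ radPow Q d K x l) : arrowMap Q d K x a v ∈ radPow Q d K x (l+1) := by
  have : radPow Q d K x l ≤ (radPow Q d K x (l+1)).comap (arrowMap Q d K x a) := by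
    rw [radPow_le_iff]
    intro w hw u
    have := wordMap_mem_radPow x (a :: w) u
    rw [wordMap_cons, List.length_cons, hw] at this
    exact this
  exact this hv

theorem radPow_le_flag (x : RepSpace Q d K) (F : ℕ → Submodule K (Carrier Q d K)) (h0 : F 0 = ⊤)
    (hF : ∀ a l v, v ∈ F l → arrowMap Q d K x a v ∈ F (l+1)) (l : ℕ) :
    radPow Q d K x l ≤ F l := by
  rw [radPow_le_iff]
  intro w hw v
  induction w generalizing l with
  | nil => simp at hw; subst hw; simp [h0]
  | cons a w ih =>
    simp at hw
    subst hw
    rw [wordMap_cons]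
    exact hF _ _ _ (ih _ rfl)

theorem trunc_iff (L : ℕ) (x : RepSpace Q d K) :
    x ∈ TruncRepVar Q d K L ↔ radPow Q d K x (L+1) = ⊥ := by
  rw [eq_bot_iff, radPow_le_iff]
  constructor
  · intro h w hw v
    simp [h w hw]
  · intro h w hw
    apply LinearMap.ext
    intro v
    simpa using h w hw v

theorem proj_arrow (x : RepSpace Q d K) (a : Fin Q.numArrows) (i : Fin Q.n) (v : Carrier Q d K) :
    proj Q d K i (arrowMap Q d K x a v) = if i = Q.tgt a then arrowMap Q d K x a v else 0 := by
  funext p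
  by_cases h : i = Q.tgt a
  · by_cases hp : p.1 = Q.tgt a <;> simp [proj, arrowMap, h, hp]
  · by_cases hp : p.1 = i
    · have : ¬ p.1 = Q.tgt a := fun h' => h (hp ▸ h')
      simp [proj, arrowMap, h, this]
    · simp [proj, h, hp]

theorem proj_radPow (x : RepSpace Q d K) (i : Fin Q.n) (l : ℕ) (v : Carrier Q d K)
    (hv : v ∈ radPow Q d K x l) : proj Q d K i v ∈ radPow Q d K x l := by
  have : radPow Q d K x l ≤ (radPow Q d K x l).comap (proj Q d K i) := by
    rw [radPow_le_iff]
    intro w hw u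
    rw [Submodule.mem_comap]
    cases w with
    | nil => simp at hw; subst hw; simp [radPow_zero]
    | cons a w =>
      have := wordMap_mem_radPow x (a :: w) u
      rw [hw] at this
      rw [wordMap_cons] at this ⊢
      rw [Module.End.mul_apply] at this ⊢
      rw [proj_arrow]
      split_ifs
      · exact this
      · exact Submodule.zero_mem _
  exact this hv

/-- Inclusion of the vertex component. -/
def inc (Q : QuiverData) (d : Fin Q.n → ℕ) (K : Type) [Field K] (i : Fin Q.n) :
    (Fin (d i) → K) →ₗ[K] Carrier Q d K where
  toFun m := fun p => if h : p.1 = i then m (Fin.cast (congrArg d h) p.2) else 0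
  map_add' u v := by funext p; by_cases h : p.1 = i <;> simp [h]
  map_smul' c u := by funext p; by_cases h : p.1 = i <;> simp [h]

theorem inc_apply_self (i : Fin Q.n) (m : Fin (d i) → K) (j : Fin (d i)) :
    inc Q d K i m ⟨i, j⟩ = m j := by simp [inc]

theorem inc_injective (i : Fin Q.n) : Function.Injective (inc Q d K i) := by
  intro u v h
  funext j
  rw [← inc_apply_self i u, h, inc_apply_self]

theorem proj_eq_inc (i : Fin Q.n) (v : Carrier Q d K) :
    proj Q d K i v = inc Q d K i (fun j => v ⟨i, j⟩) := by
  funext p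
  obtain ⟨p1, p2⟩ := p
  by_cases h : p1 = i
  · subst h; simp [proj, inc]
  · simp [proj, inc, h]

theorem proj_inc (i : Fin Q.n) (m : Fin (d i) → K) :
    proj Q d K i (inc Q d K i m) = inc Q d K i m := by
  rw [proj_eq_inc]
  simp only [inc_apply_self]

theorem sum_proj (v : Carrier Q d K) : ∑ i, proj Q d K i v = v := by
  funext p
  simp [Finset.sum_apply, proj]

theorem vdim_eq (N : Submodule K (Carrier Q d K)) (i : Fin Q.n)
    (hN : ∀ v ∈ N, proj Q d K i v ∈ N) :
    vdim Q d K N i = Module.finrank K (N.comap (inc Q d K i)) := by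
  have : N.map (proj Q d K i) = (N.comap (inc Q d K i)).map (inc Q d K i) := by
    ext u
    constructor
    · rintro ⟨v, hv, rfl⟩
      have := hN v hv
      rw [proj_eq_inc] at this ⊢
      exact ⟨_, this, rfl⟩
    · rintro ⟨v, hv, rfl⟩
      exact ⟨_, hv, proj_inc _ _⟩
  rw [vdim, this]
  exact ((Submodule.equivMapOfInjective _ (inc_injective i) _).finrank_eq).symm

theorem vdim_map (N : Submodule K (Carrier Q d K)) (h : Carrier Q d K ≃ₗ[K] Carrier Q d K)
    (hh : ∀ i v, proj Q d K i (h v) = h (proj Q d K i v)) (i : Fin Q.n) :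
    vdim Q d K (N.map (h : Carrier Q d K →ₗ[K] Carrier Q d K)) i = vdim Q d K N i := by
  have : (N.map (h : Carrier Q d K →ₗ[K] Carrier Q d K)).map (proj Q d K i)
      = (N.map (proj Q d K i)).map (h : Carrier Q d K →ₗ[K] Carrier Q d K) := by
    rw [← Submodule.map_comp, ← Submodule.map_comp]
    congr 1
    apply LinearMap.ext
    intro v
    exact hh i v
  rw [vdim, this]
  exact LinearEquiv.finrank_map_eq h _

theorem vdim_mono (N N' : Submodule K (Carrier Q d K)) (h : N ≤ N') (i : Fin Q.n) :
    vdim Q d K N i ≤ vdim Q d K N' i :=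
  Submodule.finrank_mono (Submodule.map_mono h)

theorem vdim_bot (i : Fin Q.n) : vdim Q d K ⊥ i = 0 := by
  simp [vdim]

theorem vdim_top (i : Fin Q.n) : vdim Q d K ⊤ i = d i := by
  rw [vdim_eq _ _ (fun _ _ => Submodule.mem_top), Submodule.comap_top, finrank_top]
  simp

theorem vdim_succ (L : ℕ) (x : RepSpace Q d K) (l : ℕ) (hl : l < L + 1) (i : Fin Q.n) :
    vdim Q d K (radPow Q d K x l) i = radLayering Q d K L x ⟨l, hl⟩ i +
      vdim Q d K (radPow Q d K x (l+1)) i := by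
  have := vdim_mono _ _ (radPow_antitone x (Nat.le_succ l)) i
  simp only [radLayering]
  simp only [Nat.succ_eq_add_one] at this
  omega

theorem hasDimVec_rad (L : ℕ) (x : RepSpace Q d K) (hx : x ∈ TruncRepVar Q d K L) :
    hasDimVec (radLayering Q d K L x) d := by
  intro i
  rw [trunc_iff] at hx
  have h1 : ∑ l : Fin (L+1), radLayering Q d K L x l i =
      ∑ l ∈ Finset.range (L+1), (vdim Q d K (radPow Q d K x l) i -
        vdim Q d K (radPow Q d K x (l+1)) i) := by
    rw [Finset.sum_range]
    rfl
  have h2 : ∀ n, ∑ l ∈ Finset.range n, (vdim Q d K (radPow Q d K x l) i -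
        vdim Q d K (radPow Q d K x (l+1)) i) + vdim Q d K (radPow Q d K x n) i = d i := by
    intro n
    induction n with
    | zero => simp [radPow_zero, vdim_top]
    | succ n ih =>
      have := vdim_mono _ _ (radPow_antitone x (Nat.le_add_right n 1)) i
      rw [Finset.sum_range_succ]
      omega
  have h3 := h2 (L+1)
  rw [hx, vdim_bot] at h3
  rw [h1]
  exact h3

theorem vdim_eq_of_layering (L : ℕ) (x y : RepSpace Q d K) (hx : x ∈ TruncRepVar Q d K L)
    (hy : y ∈ TruncRepVar Q d K L) (h : radLayering Q d K L x = radLayering Q d K L y)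
    (l : ℕ) (i : Fin Q.n) :
    vdim Q d K (radPow Q d K x l) i = vdim Q d K (radPow Q d K y l) i := by
  rw [trunc_iff] at hx hy
  by_cases hl : L + 1 ≤ l
  · have h1 : radPow Q d K x l = ⊥ := eq_bot_iff.2 (hx ▸ radPow_antitone x hl)
    have h2 : radPow Q d K y l = ⊥ := eq_bot_iff.2 (hy ▸ radPow_antitone y hl)
    rw [h1, h2]
  · obtain ⟨k, hk⟩ : ∃ k, l + k = L + 1 := ⟨L + 1 - l, by omega⟩
    induction k generalizing l with
    | zero => omega
    | succ k ih =>
      have hl' : l < L + 1 := by omega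
      rw [vdim_succ L x l hl', vdim_succ L y l hl', h]
      congr 1
      by_cases hk0 : L + 1 ≤ l + 1
      · have : l + 1 = L + 1 := by omega
        rw [this, hx, hy]
      · exact ih (l+1) hk0 (by omega)

/-- A graded automorphism matching the radical flags. -/
theorem exists_graded (L : ℕ) (x y : RepSpace Q d K) (hx : x ∈ TruncRepVar Q d K L)
    (hy : y ∈ TruncRepVar Q d K L) (h : radLayering Q d K L x = radLayering Q d K L y) :
    ∃ g : Carrier Q d K ≃ₗ[K] Carrier Q d K,
      (∀ i v, proj Q d K i (g v) = g (proj Q d K i v)) ∧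
      ∀ l v, v ∈ radPow Q d K y l ↔ g v ∈ radPow Q d K x l := by
  have hv := vdim_eq_of_layering L x y hx hy h
  rw [trunc_iff] at hx hy
  have h1 : ∀ i, ∃ e : (Fin (d i) → K) ≃ₗ[K] (Fin (d i) → K), ∀ l v,
      v ∈ (radPow Q d K y l).comap (inc Q d K i) ↔
      e v ∈ (radPow Q d K x l).comap (inc Q d K i) := by
    intro i
    apply flag_equiv (L+1) (Fin (d i) → K) (Fin (d i) → K)
      (fun l => (radPow Q d K y l).comap (inc Q d K i))
      (fun l => (radPow Q d K x l).comap (inc Q d K i))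
    · exact fun a b hab => Submodule.comap_mono (radPow_antitone y hab)
    · exact fun a b hab => Submodule.comap_mono (radPow_antitone x hab)
    · intro l
      rw [← vdim_eq _ _ (proj_radPow y i l), ← vdim_eq _ _ (proj_radPow x i l), hv]
    · simp only [hy]
      exact LinearMap.ker_eq_bot.2 (inc_injective i)
    · simp only [hx]
      exact LinearMap.ker_eq_bot.2 (inc_injective i)
    · rfl
  choose e he using h1
  let g : Carrier Q d K ≃ₗ[K] Carrier Q d K :=
    (LinearEquiv.piCurry K (fun (i : Fin Q.n) (_ : Fin (d i)) => K)) ≪≫ₗ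
      (LinearEquiv.piCongrRight e) ≪≫ₗ
      (LinearEquiv.piCurry K (fun (i : Fin Q.n) (_ : Fin (d i)) => K)).symm
  have hg : ∀ v i j, g v ⟨i, j⟩ = e i (fun k => v ⟨i, k⟩) j := fun v i j => rfl
  have hgi : ∀ i v, proj Q d K i (g v) = inc Q d K i (e i (fun k => v ⟨i, k⟩)) := by
    intro i v
    rw [proj_eq_inc]
    congr 1
  refine ⟨g, fun i v => ?_, fun l v => ?_⟩
  · funext ⟨p, q⟩
    rw [hg]
    by_cases hp : p = i
    · subst hp
      simp [proj, hg]
    · have : (fun k => proj Q d K i v ⟨p, k⟩) = 0 := by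
        funext k; simp [proj, hp]
      rw [this]
      simp [proj, hp]
  · have key : ∀ (z : RepSpace Q d K) u, u ∈ radPow Q d K z l ↔
        ∀ i, proj Q d K i u ∈ radPow Q d K z l := by
      intro z u
      constructor
      · exact fun hu i => proj_radPow z i l u hu
      · intro hu
        rw [← sum_proj u]
        exact Submodule.sum_mem _ fun i _ => hu i
    rw [key y, key x]
    apply forall_congr'
    intro i
    rw [hgi, proj_eq_inc]
    exact he i l _

/-- Scaled conjugation transports the radical filtration. -/
theorem radPow_conj (z z' : RepSpace Q d K) (h : Carrier Q d K ≃ₗ[K] Carrier Q d K) (c : K)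
    (hc : c ≠ 0)
    (hh : ∀ a v, arrowMap Q d K z' a (h v) = c • h (arrowMap Q d K z a v)) (l : ℕ) :
    radPow Q d K z' l =
      (radPow Q d K z l).map (h : Carrier Q d K →ₗ[K] Carrier Q d K) := by
  have hw : ∀ (w : List (Fin Q.numArrows)) v,
      wordMap Q d K z' w (h v) = c ^ w.length • h (wordMap Q d K z w v) := by
    intro w v
    induction w with
    | nil => simp [wordMap]
    | cons a w ih =>
      rw [wordMap_cons, wordMap_cons, Module.End.mul_apply, Module.End.mul_apply, ih, map_smul,
        hh, smul_smul, List.length_cons, pow_succ]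
  apply le_antisymm
  · rw [radPow_le_iff]
    rintro w rfl v
    obtain ⟨u, rfl⟩ := h.surjective v
    rw [hw]
    exact Submodule.smul_mem _ _ ⟨_, wordMap_mem_radPow z w u, rfl⟩
  · rw [Submodule.map_le_iff_le_comap, radPow_le_iff]
    rintro w rfl v
    rw [Submodule.mem_comap]
    have := wordMap_mem_radPow z' w (h v)
    rw [hw] at this
    exact (Submodule.smul_mem_iff _ (pow_ne_zero _ hc)).1 this


open Polynomial

/-- Evaluate a polynomial curve. -/
def ev (Z : Coords Q d → K[X]) (t : K) : RepSpace Q d K := fun c => (Z c).eval t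

theorem arrMat_ev (Z : Coords Q d → K[X]) (t : K) (a : Fin Q.numArrows) :
    arrMat (ev Z t) a = (evalRingHom t).mapMatrix (arrMat Z a) := by
  ext p q
  simp only [arrMat, ev, RingHom.mapMatrix_apply, Matrix.map_apply, Matrix.of_apply]
  split_ifs <;> simp

theorem wordMap_ev (Z : Coords Q d → K[X]) (t : K) (w : List (Fin Q.numArrows)) :
    wordMap Q d K (ev Z t) w =
      Matrix.toLin' ((evalRingHom t).mapMatrix (w.map (arrMat Z)).prod) := by
  induction w with
  | nil => simp [wordMap]; rfl
  | cons a w ih =>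
    rw [wordMap_cons, ih, arrowMap_eq, arrMat_ev, List.map_cons, List.prod_cons, map_mul,
      Matrix.toLin'_mul]
    rfl

theorem radPow_generic (Z : Coords Q d → K[X]) (t0 : K) (l : ℕ) :
    ∃ P : K[X], P ≠ 0 ∧ ∀ t, P.eval t ≠ 0 →
      Module.finrank K (radPow Q d K (ev Z t0) l) ≤ Module.finrank K (radPow Q d K (ev Z t) l) := by
  classical
  let v : ({w : List (Fin Q.numArrows) // w.length = l} × Idx Q d) → Idx Q d → K[X] :=
    fun wj i => (wj.1.1.map (arrMat Z)).prod i wj.2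
  let vt : K → ({w : List (Fin Q.numArrows) // w.length = l} × Idx Q d) → Carrier Q d K :=
    fun t k i => (v k i).eval t
  have hvt : ∀ t k, vt t k = wordMap Q d K (ev Z t) k.1.1 (Pi.single k.2 1) := by
    intro t k
    funext i
    rw [wordMap_ev, Matrix.toLin'_apply]
    simp [vt, v]
  have hspan : ∀ t, Submodule.span K (Set.range (vt t)) = radPow Q d K (ev Z t) l := by
    intro t
    apply le_antisymm
    · rw [Submodule.span_le]
      rintro _ ⟨k, rfl⟩
      rw [hvt]
      have := wordMap_mem_radPow (ev Z t) k.1.1 (Pi.single k.2 1)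
      rwa [k.1.2] at this
    · rw [radPow_le_iff]
      intro w hw u
      rw [← Finset.univ_sum_single u, map_sum]
      apply Submodule.sum_mem
      intro j _
      have : (Pi.single j (u j) : Carrier Q d K) = u j • Pi.single j 1 := by
        rw [← Pi.single_smul]; simp
      rw [this, map_smul]
      apply Submodule.smul_mem
      apply Submodule.subset_span
      exact ⟨(⟨w, hw⟩, j), hvt t _⟩
  obtain ⟨κ, a, -, hs, hi⟩ := exists_linearIndependent' K (vt t0)
  have : Finite κ := hi.finite
  have : Fintype κ := Fintype.ofFinite κ
  obtain ⟨P, hP0, hP⟩ := generic_indep (fun k => v (a k)) t0 hi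
  refine ⟨P, hP0, fun t ht => ?_⟩
  have h1 : LinearIndependent K (vt t ∘ a) := hP t ht
  rw [← hspan, ← hs, ← hspan, finrank_span_eq_card hi, ← finrank_span_eq_card h1]
  apply Submodule.finrank_mono
  apply Submodule.span_mono
  rintro _ ⟨k, rfl⟩
  exact ⟨a k, rfl⟩

theorem adjugate_comm {I : Type} [Fintype I] [DecidableEq I] (H P : Matrix I I K)
    (hd : H.det ≠ 0) (h : P * H = H * P) : P * H.adjugate = H.adjugate * P := by
  have h1 : H.adjugate * (P * H) * H.adjugate = H.adjugate * (H * P) * H.adjugate := by rw [h]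
  have h2 : H.adjugate * (P * H) * H.adjugate = H.det • (H.adjugate * P) := by
    rw [← Matrix.mul_assoc, Matrix.mul_assoc _ H, Matrix.mul_adjugate]; simp
  have h3 : H.adjugate * (H * P) * H.adjugate = H.det • (P * H.adjugate) := by
    rw [← Matrix.mul_assoc, Matrix.adjugate_mul]; simp
  rw [h2, h3] at h1
  exact (smul_right_injective _ hd h1).symm

/-- The connecting curve. -/
theorem exists_curve (L : ℕ) (x y : RepSpace Q d K) (hx : x ∈ TruncRepVar Q d K L)
    (hy : y ∈ TruncRepVar Q d K L) (h : radLayering Q d K L x = radLayering Q d K L y) :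
    ∃ (Γ : Coords Q d → K[X]) (P : K[X]), P ≠ 0 ∧ ev Γ 0 = x ∧ ev Γ 1 = y ∧
      ∀ t, P.eval t ≠ 0 → ev Γ t ∈ TruncRepVar Q d K L ∧
        radLayering Q d K L (ev Γ t) = radLayering Q d K L x := by
  classical
  obtain ⟨g, hg, hgF⟩ := exists_graded L x y hx hy h
  let G : Matrix (Idx Q d) (Idx Q d) K := LinearMap.toMatrix' (g : Carrier Q d K →ₗ[K] Carrier Q d K)
  let G' : Matrix (Idx Q d) (Idx Q d) K :=
    LinearMap.toMatrix' (g.symm : Carrier Q d K →ₗ[K] Carrier Q d K)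
  have hG : Matrix.toLin' G = (g : Carrier Q d K →ₗ[K] Carrier Q d K) := Matrix.toLin'_toMatrix' _
  have hG' : Matrix.toLin' G' = (g.symm : Carrier Q d K →ₗ[K] Carrier Q d K) :=
    Matrix.toLin'_toMatrix' _
  have hG'G : G' * G = 1 := by
    apply Matrix.toLin'.injective
    rw [Matrix.toLin'_mul, hG, hG', Matrix.toLin'_one]
    ext; simp
  have hGG' : G * G' = 1 := by
    apply Matrix.toLin'.injective
    rw [Matrix.toLin'_mul, hG, hG', Matrix.toLin'_one]
    ext; simp
  have hGp : ∀ i, projMat K i * G = G * projMat K i := by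
    intro i
    apply Matrix.toLin'.injective
    rw [Matrix.toLin'_mul, Matrix.toLin'_mul, hG, ← proj_eq]
    apply LinearMap.ext
    exact hg i
  have hGp' : ∀ i, projMat K i * G' = G' * projMat K i := by
    intro i
    calc projMat K i * G' = (G' * G) * projMat K i * G' := by rw [hG'G, Matrix.one_mul]
      _ = G' * (projMat K i * G) * G' := by rw [hGp]; simp only [Matrix.mul_assoc]
      _ = G' * projMat K i * (G * G') := by simp only [Matrix.mul_assoc]
      _ = _ := by rw [hGG', Matrix.mul_one]
  have hdet : G'.det ≠ 0 := by
    intro h0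
    have := congrArg Matrix.det hG'G
    rw [Matrix.det_mul, h0] at this
    simp at this
  let c : K := (G'.det)⁻¹
  let My : Fin Q.numArrows → Matrix (Idx Q d) (Idx Q d) K := fun a => c • (G * arrMat y a * G')
  let y' : RepSpace Q d K := coordOf My
  have hy' : ∀ a, arrMat y' a = c • (G * arrMat y a * G') := by
    intro a
    apply arrMat_coordOf My a
    · simp only [My, Matrix.mul_smul]
      rw [← Matrix.mul_assoc, ← Matrix.mul_assoc, hGp, Matrix.mul_assoc G, proj_arrMat]
    · simp only [My, Matrix.smul_mul]
      rw [Matrix.mul_assoc, ← hGp', ← Matrix.mul_assoc, Matrix.mul_assoc G, arrMat_proj]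
  let F := radPow Q d K x
  have hxF : ∀ a l v, v ∈ F l → arrowMap Q d K x a v ∈ F (l+1) :=
    fun a l v hv => arrow_radPow x a l v hv
  have hyF : ∀ a l v, v ∈ F l → arrowMap Q d K y' a v ∈ F (l+1) := by
    intro a l v hv
    have h1 : arrowMap Q d K y' a v = c • g (arrowMap Q d K y a (g.symm v)) := by
      rw [arrowMap_eq, hy', map_smul, Matrix.toLin'_mul, Matrix.toLin'_mul, hG, hG',
        ← arrowMap_eq]
      rfl
    rw [h1]
    apply Submodule.smul_mem
    apply (hgF _ _).1
    apply arrow_radPow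
    apply (hgF _ _).2
    simpa using hv
  let Z : Coords Q d → K[X] := fun k => (1 - X) * C (x k) + X * C (y' k)
  have hZ : ∀ t, ev Z t = (1 - t) • x + t • y' := by
    intro t; funext k; simp [ev, Z]; exact mul_comm _ _
  have hZa : ∀ t a, arrMat (ev Z t) a = (1 - t) • arrMat x a + t • arrMat y' a := by
    intro t a
    rw [hZ]
    ext p q
    simp only [arrMat, Matrix.of_apply, Matrix.add_apply, Matrix.smul_apply]
    split_ifs <;> simp
  have hZF : ∀ t l, radPow Q d K (ev Z t) l ≤ F l := by
    intro t l
    apply radPow_le_flag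
    · exact radPow_zero x
    · intro a l v hv
      rw [arrowMap_eq, hZa, map_add, map_smul, map_smul, ← arrowMap_eq, ← arrowMap_eq]
      exact Submodule.add_mem _ (Submodule.smul_mem _ _ (hxF a l v hv))
        (Submodule.smul_mem _ _ (hyF a l v hv))
  have hZ0 : ev Z 0 = x := by rw [hZ]; simp
  have hgen := fun l => radPow_generic Z 0 l
  choose Pl hPl0 hPl using hgen
  let H : Matrix (Idx Q d) (Idx Q d) K[X] := (1 - X : K[X]) • 1 + (X : K[X]) • G'.map C
  let Ht : K → Matrix (Idx Q d) (Idx Q d) K := fun t => (1 - t) • 1 + t • G'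
  have hHt : ∀ t, (evalRingHom t).mapMatrix H = Ht t := by
    intro t
    ext p q
    by_cases hpq : p = q <;> simp [H, Ht, hpq] <;> exact mul_comm _ _
  let MΓ : Fin Q.numArrows → Matrix (Idx Q d) (Idx Q d) K[X] :=
    fun a => H * arrMat Z a * H.adjugate
  let Γ : Coords Q d → K[X] := coordOf MΓ
  have hΓ : ∀ t, ev Γ t = coordOf (fun a => Ht t * arrMat (ev Z t) a * (Ht t).adjugate) := by
    intro t
    have : ∀ a, Ht t * arrMat (ev Z t) a * (Ht t).adjugate =
        (evalRingHom t).mapMatrix (MΓ a) := by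
      intro a
      simp only [MΓ]
      rw [map_mul, map_mul, RingHom.map_adjugate, hHt, arrMat_ev]
    simp only [this]
    rfl
  have hHtp : ∀ t i, projMat K i * Ht t = Ht t * projMat K i := by
    intro t i
    simp [Ht, Matrix.mul_add, Matrix.add_mul, hGp']
  refine ⟨Γ, H.det * ∏ l ∈ Finset.range (L+1), Pl l, ?_, ?_, ?_, ?_⟩
  · apply mul_ne_zero
    · intro h0
      have := congrArg (evalRingHom (0:K)) h0
      rw [RingHom.map_det, hHt] at this
      simp [Ht] at this
    · exact Finset.prod_ne_zero_iff.2 fun l _ => hPl0 l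
  · rw [hΓ, hZ0]
    simp [Ht, coordOf_arrMat]
  · have h1 : ev Z 1 = y' := by rw [hZ]; simp
    have h2 : Ht 1 = G' := by simp [Ht]
    rw [hΓ, h1, h2]
    have : ∀ a, G' * arrMat y' a * G'.adjugate = arrMat y a := by
      intro a
      rw [hy', Matrix.mul_smul, Matrix.smul_mul]
      have : G' * (G * arrMat y a * G') * G'.adjugate
          = (G' * G) * arrMat y a * (G' * G'.adjugate) := by simp only [Matrix.mul_assoc]
      rw [this, hG'G, Matrix.mul_adjugate, Matrix.one_mul, Matrix.mul_smul, smul_smul,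
        Matrix.mul_one]
      simp [c, hdet]
    simp only [this]
    exact coordOf_arrMat y
  · intro t ht
    rw [eval_mul, eval_prod] at ht
    have hd : (Ht t).det ≠ 0 := by
      have := left_ne_zero_of_mul ht
      rwa [← coe_evalRingHom, RingHom.map_det, hHt] at this
    have hP := Finset.prod_ne_zero_iff.1 (right_ne_zero_of_mul ht)
    have hrad : ∀ l, radPow Q d K (ev Z t) l = F l := by
      intro l
      by_cases hl : l < L + 1
      · apply Submodule.eq_of_le_of_finrank_le (hZF t l)
        have := hPl l t (hP l (Finset.mem_range.2 hl))
        rwa [hZ0] at this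
      · have h1 : F l = ⊥ := eq_bot_iff.2 ((trunc_iff L x).1 hx ▸ radPow_antitone x (by omega))
        rw [h1, eq_bot_iff, ← h1]
        exact hZF t l
    have hu : IsUnit (Ht t).det := isUnit_iff_ne_zero.2 hd
    let k : Carrier Q d K ≃ₗ[K] Carrier Q d K :=
      LinearEquiv.ofLinearMap (Matrix.toLin' (Ht t)) (Matrix.toLin' (Ht t)⁻¹)
        (by rw [← Matrix.toLin'_mul, Matrix.mul_nonsing_inv _ hu, Matrix.toLin'_one])
        (by rw [← Matrix.toLin'_mul, Matrix.nonsing_inv_mul _ hu, Matrix.toLin'_one])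
    have hk : ∀ v, k v = Matrix.toLin' (Ht t) v := fun v => rfl
    have hkp : ∀ i v, proj Q d K i (k v) = k (proj Q d K i v) := by
      intro i v
      rw [hk, hk, proj_eq, ← Matrix.toLin'_mul_apply, ← Matrix.toLin'_mul_apply, hHtp]
    have harr : ∀ a, arrMat (ev Γ t) a = Ht t * arrMat (ev Z t) a * (Ht t).adjugate := by
      intro a
      rw [hΓ]
      apply arrMat_coordOf (fun a => Ht t * arrMat (ev Z t) a * (Ht t).adjugate) a
      · rw [← Matrix.mul_assoc, ← Matrix.mul_assoc, hHtp, Matrix.mul_assoc (Ht t), proj_arrMat]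
      · rw [Matrix.mul_assoc, ← adjugate_comm _ _ hd (hHtp t _), ← Matrix.mul_assoc,
          Matrix.mul_assoc (Ht t), arrMat_proj]
    have hconj := radPow_conj (ev Z t) (ev Γ t) k (Ht t).det hd (by
      intro a v
      rw [hk, hk, arrowMap_eq, arrowMap_eq, ← Matrix.toLin'_mul_apply, ← Matrix.toLin'_mul_apply,
        harr, Matrix.mul_assoc, Matrix.adjugate_mul, Matrix.mul_smul, Matrix.mul_one, map_smul]
      rfl)
    have hR : ∀ l, radPow Q d K (ev Γ t) l =
        (F l).map (k : Carrier Q d K →ₗ[K] Carrier Q d K) := by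
      intro l; rw [hconj, hrad]
    constructor
    · rw [trunc_iff, hR]
      have : F (L+1) = ⊥ := (trunc_iff L x).1 hx
      rw [this, Submodule.map_bot]
    · funext l i
      simp only [radLayering]
      rw [hR, hR, vdim_map _ k hkp, vdim_map _ k hkp]

theorem stratum_irreducible [Infinite K] (L : ℕ) (S : Fin (L+1) → Fin Q.n → ℕ) 
    (hne : ({x : TruncV Q d K L | radLayering Q d K L x.1 = S}).Nonempty) :
    IsIrreducible {x : TruncV Q d K L | radLayering Q d K L x.1 = S} := by
  refine ⟨hne, ?_⟩
  rintro u v hu hv ⟨x, hxS, hxu⟩ ⟨y, hyS, hyv⟩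
  obtain ⟨U, hU, rfl⟩ := isOpen_induced_iff.1 hu
  obtain ⟨V, hV, rfl⟩ := isOpen_induced_iff.1 hv
  obtain ⟨p, hp, hpU⟩ := zariski_basis U hU x.1 hxu
  obtain ⟨q, hq, hqV⟩ := zariski_basis V hV y.1 hyv
  simp only [Set.mem_ofPred_eq] at hxS hyS
  obtain ⟨Γ, P, hP0, h0, h1, hP⟩ := exists_curve L x.1 y.1 x.2 y.2 (hxS.trans hyS.symm)
  have hcomp : ∀ (r : MvPolynomial (Coords Q d) K) t,
      (MvPolynomial.eval₂ C Γ r).eval t = MvPolynomial.eval (ev Γ t) r := by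
    intro r t
    rw [← coe_evalRingHom, MvPolynomial.hom_eval₂, MvPolynomial.eval]
    have : (evalRingHom t).comp C = RingHom.id K := by ext; simp
    rw [this]
    rfl
  have hp' : MvPolynomial.eval₂ C Γ p ≠ 0 := by
    intro h
    have := hcomp p 0
    rw [h, h0] at this
    exact hp (by simpa using this.symm)
  have hq' : MvPolynomial.eval₂ C Γ q ≠ 0 := by
    intro h
    have := hcomp q 1
    rw [h, h1] at this
    exact hq (by simpa using this.symm)
  obtain ⟨t, ht⟩ : ∃ t, (P * (MvPolynomial.eval₂ C Γ p * MvPolynomial.eval₂ C Γ q)).eval t ≠ 0 := by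
    by_contra hcon
    push Not at hcon
    exact mul_ne_zero hP0 (mul_ne_zero hp' hq') (Polynomial.funext fun t => by simpa using hcon t)
  rw [eval_mul, eval_mul, hcomp, hcomp] at ht
  obtain ⟨hT, hR⟩ := hP t (left_ne_zero_of_mul ht)
  refine ⟨⟨ev Γ t, hT⟩, hR.trans hxS, ?_, ?_⟩
  · exact hpU _ (left_ne_zero_of_mul (right_ne_zero_of_mul ht))
  · exact hqV _ (right_ne_zero_of_mul (right_ne_zero_of_mul ht))

theorem finite_layerings (L : ℕ) :
    (Set.range fun x : TruncV Q d K L => radLayering Q d K L x.1).Finite := by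
  apply Set.Finite.subset (Set.Finite.pi' fun _ : Fin (L+1) => Set.Finite.pi' fun i : Fin Q.n =>
    Set.finite_Iic (d i))
  rintro _ ⟨x, rfl⟩ l i
  have := hasDimVec_rad L x.1 x.2 i
  rw [Set.mem_Iic, ← this]
  exact Finset.single_le_sum (f := fun l => radLayering Q d K L x.1 l i)
    (fun _ _ => Nat.zero_le _) (Finset.mem_univ l)

theorem component_eq [Infinite K] (L : ℕ) (Cc : Set (TruncV Q d K L))
    (hC : Cc ∈ irreducibleComponents (TruncV Q d K L)) :
    ∃ S : Fin (L+1) → Fin Q.n → ℕ, hasDimVec S d ∧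
        ({x : TruncV Q d K L | radLayering Q d K L x.1 = S}).Nonempty ∧
        Cc = closure {x : TruncV Q d K L | radLayering Q d K L x.1 = S} := by
  classical
  have hfin := finite_layerings (Q := Q) (d := d) (K := K) L
  let T : Finset (Set (TruncV Q d K L)) := hfin.toFinset.image fun S =>
    closure {x : TruncV Q d K L | radLayering Q d K L x.1 = S}
  obtain ⟨z, hz, hCz⟩ := isIrreducible_iff_sUnion_isClosed.1 hC.1 T
    (by
      intro z hz
      obtain ⟨S, -, rfl⟩ := Finset.mem_image.1 hz
      exact isClosed_closure)
    (by
      intro x _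
      refine ⟨_, Finset.mem_coe.2 (Finset.mem_image.2
        ⟨radLayering Q d K L x.1, hfin.mem_toFinset.2 ⟨x, rfl⟩, rfl⟩), subset_closure rfl⟩)
  obtain ⟨S, hS, rfl⟩ := Finset.mem_image.1 hz
  obtain ⟨x, hx⟩ := hfin.mem_toFinset.1 hS
  simp only at hx
  have hne : ({x : TruncV Q d K L | radLayering Q d K L x.1 = S}).Nonempty := ⟨x, hx⟩
  refine ⟨S, hx ▸ hasDimVec_rad L x.1 x.2, hne, ?_⟩
  exact le_antisymm hCz (hC.2 (stratum_irreducible L S hne).closure hCz)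

end Reps

end HW

open QuiverData in
/-- For a truncated path algebra `Λ = KQ/⟨paths of length L+1⟩`:
every nonempty stratum `Rep S` (points with radical layering `S`) is irreducible, and
every irreducible component of `Rep_d(Λ)` is the closure of `Rep S` for some realizable
`d`-dimensional semisimple sequence `S`. -/
theorem statement_9 (K : Type) [Field K] [IsAlgClosed K]
    (Q : QuiverData) (L : ℕ) (hL : 0 < L) (d : Fin Q.n → ℕ) :
    (∀ S : Fin (L+1) → Fin Q.n → ℕ, hasDimVec S d →
      ({x : TruncV Q d K L | radLayering Q d K L x.1 = S}).Nonempty →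
      IsIrreducible {x : TruncV Q d K L | radLayering Q d K L x.1 = S}) ∧
    ∀ C ∈ irreducibleComponents (TruncV Q d K L),
      ∃ S : Fin (L+1) → Fin Q.n → ℕ, hasDimVec S d ∧
        ({x : TruncV Q d K L | radLayering Q d K L x.1 = S}).Nonempty ∧
        C = closure {x : TruncV Q d K L | radLayering Q d K L x.1 = S} := by
  have : Infinite K := IsAlgClosed.instInfinite
  exact ⟨fun S _ hne => HW.stratum_irreducible L S hne, fun C hC => HW.component_eq L C hC⟩
end

section
/- Let Λ = KQ/⟨all paths of length L+1⟩ be a truncated path algebra over an algebraically closed field and A the adjacency matrix of Q. For any semisimple sequence S = (S_0,…,S_L) of Λ-modules, the following are equivalent: (i) S is realizable, i.e., there exists a Λ-module M with radical layering S(M) = S; (ii) for every 0 ≤ l ≤ L−1, the two-term sequence (S_l, S_{l+1}) is realizable over Λ/J²; (iii) dim S_{l+1} ≤ (dim S_l)·A componentwise for every 0 ≤ l ≤ L−1. -/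
open Finset

namespace QuiverData

/-! ## Linear algebra helpers -/

lemma finrank_iSup_finset_le {K V ι : Type} [Field K] [AddCommGroup V] [Module K V]
    [FiniteDimensional K V] (s : Finset ι) (U W : ι → Submodule K V)
    (c : ι → ℕ) (N : Submodule K V)
    (h : ∀ a ∈ s, ∃ C : Submodule K V, U a ≤ W a ⊔ C ∧ Module.finrank K C ≤ c a)
    (hW : ∀ a ∈ s, W a ≤ N) :
    Module.finrank K (N ⊔ ⨆ a ∈ s, U a : Submodule K V) ≤
      Module.finrank K N + ∑ a ∈ s, c a := by
  classical
  induction s using Finset.induction_on with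
  | empty =>
    have h0 : (⨆ a ∈ (∅ : Finset ι), U a) = ⊥ := by simp
    rw [h0, sup_bot_eq]
    simp
  | insert a s ha ih =>
    have ih' := ih (fun b hb => h b (Finset.mem_insert_of_mem hb))
      (fun b hb => hW b (Finset.mem_insert_of_mem hb))
    obtain ⟨C, hC, hc⟩ := h a (Finset.mem_insert_self a s)
    have hWa := hW a (Finset.mem_insert_self a s)
    rw [Finset.sum_insert ha, Finset.iSup_insert]
    have hle : (N ⊔ (U a ⊔ ⨆ b ∈ s, U b) : Submodule K V) ≤ (N ⊔ ⨆ b ∈ s, U b) ⊔ C := by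
      refine sup_le (le_sup_left.trans le_sup_left) (sup_le (hC.trans ?_) ?_)
      · exact sup_le_sup_right (hWa.trans le_sup_left) C
      · exact le_sup_right.trans le_sup_left
    have h1 := Submodule.finrank_mono hle
    have h2 := Submodule.finrank_add_le_finrank_add_finrank (N ⊔ ⨆ b ∈ s, U b) C
    omega

lemma exists_compl_map {K V V' : Type} [Field K] [AddCommGroup V] [Module K V]
    [FiniteDimensional K V] [AddCommGroup V'] [Module K V'] [FiniteDimensional K V']
    (f : V →ₗ[K] V') (A B : Submodule K V) (hBA : B ≤ A) :
    ∃ C : Submodule K V', A.map f ≤ B.map f ⊔ C ∧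
      Module.finrank K C ≤ Module.finrank K A - Module.finrank K B := by
  obtain ⟨D, hD⟩ := Submodule.exists_isCompl B
  refine ⟨(D ⊓ A).map f, ?_, ?_⟩
  · rw [← Submodule.map_sup]
    apply Submodule.map_mono
    rw [← sup_inf_assoc_of_le D hBA, hD.sup_eq_top, top_inf_eq]
  · refine (Submodule.finrank_map_le f _).trans ?_
    have h1 := Submodule.finrank_sup_add_finrank_inf_eq B (D ⊓ A)
    have h2 : B ⊓ (D ⊓ A) = ⊥ := by
      rw [← inf_assoc, hD.inf_eq_bot, bot_inf_eq]
    have h3 : B ⊔ (D ⊓ A) = A := by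
      rw [← sup_inf_assoc_of_le D hBA, hD.sup_eq_top, top_inf_eq]
    rw [h2, h3, finrank_bot] at h1
    omega

/-- Functions supported on `T`. -/
def suppSub (K ι : Type) [Field K] (T : ι → Prop) : Submodule K (ι → K) where
  carrier := {m | ∀ j, ¬ T j → m j = 0}
  add_mem' := by
    intro u v hu hv j hj
    simp [hu j hj, hv j hj]
  zero_mem' := by intro j _; rfl
  smul_mem' := by
    intro c u hu j hj
    simp [hu j hj]

lemma mem_suppSub {K ι : Type} [Field K] {T : ι → Prop} {m : ι → K} :
    m ∈ suppSub K ι T ↔ ∀ j, ¬ T j → m j = 0 := Iff.rfl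

open Classical in
lemma finrank_suppSub (K ι : Type) [Field K] [Fintype ι] (T : ι → Prop) :
    Module.finrank K (suppSub K ι T) = Nat.card {j // T j} := by
  have e : suppSub K ι T ≃ₗ[K] ({j // T j} → K) :=
    { toFun := fun m j => m.1 j.1
      map_add' := fun _ _ => rfl
      map_smul' := fun _ _ => rfl
      invFun := fun f => ⟨fun j => if h : T j then f ⟨j, h⟩ else 0, by
        intro j hj
        simp [hj]⟩
      left_inv := by
        intro m
        apply Subtype.ext
        funext j
        by_cases h : T j
        · simp [h]
        · simp [h, m.2 j h]
      right_inv := by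
        intro f
        funext j
        simp [j.2] }
  rw [e.finrank_eq, Module.finrank_fintype_fun_eq_card, Nat.card_eq_fintype_card]

lemma suppSub_le {K ι : Type} [Field K] [Finite ι] [DecidableEq ι] {T : ι → Prop}
    {N : Submodule K (ι → K)}
    (h : ∀ j, T j → Pi.single j (1 : K) ∈ N) : suppSub K ι T ≤ N := by
  classical
  have := Fintype.ofFinite ι
  intro m hm
  rw [pi_eq_sum_univ' m]
  refine Submodule.sum_mem _ fun j _ => ?_
  by_cases hj : T j
  · refine Submodule.smul_mem _ _ ?_
    convert h j hj using 1
  · rw [hm j hj, zero_smul]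
    exact N.zero_mem

/-! ## General facts on representations -/

section gen

variable (Q : QuiverData) (d : Fin Q.n → ℕ) (K : Type) [Field K]

lemma wordMap_cons (x : RepSpace Q d K) (a : Fin Q.numArrows) (w : List (Fin Q.numArrows)) :
    wordMap Q d K x (a :: w) = (arrowMap Q d K x a : Module.End K _) * wordMap Q d K x w := by
  simp [wordMap]

lemma wordMap_concat (x : RepSpace Q d K) (a : Fin Q.numArrows) (w : List (Fin Q.numArrows)) :
    wordMap Q d K x (w ++ [a]) = wordMap Q d K x w * (arrowMap Q d K x a : Module.End K _) := by
  simp [wordMap]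

lemma radPow_zero (x : RepSpace Q d K) : radPow Q d K x 0 = ⊤ := by
  rw [eq_top_iff]
  refine le_trans ?_ (le_iSup _ (⟨[], rfl⟩ : {w : List (Fin Q.numArrows) // w.length = 0}))
  simp [wordMap, Module.End.one_eq_id, LinearMap.range_id]

lemma radPow_succ (x : RepSpace Q d K) (l : ℕ) :
    radPow Q d K x (l+1) = ⨆ a, (radPow Q d K x l).map (arrowMap Q d K x a) := by
  apply le_antisymm
  · refine iSup_le ?_
    rintro ⟨w, hw⟩
    cases w with
    | nil => simp at hw
    | cons a w =>
      refine le_trans ?_ (le_iSup _ a)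
      rw [wordMap_cons, Module.End.mul_eq_comp, LinearMap.range_comp]
      exact Submodule.map_mono (le_iSup (fun w : {w : List (Fin Q.numArrows) // w.length = l} =>
        LinearMap.range (wordMap Q d K x w.1)) ⟨w, by simpa using hw⟩)
  · refine iSup_le fun a => ?_
    rw [radPow, Submodule.map_iSup]
    refine iSup_le ?_
    rintro ⟨w, hw⟩
    refine le_trans ?_ (le_iSup _ (⟨a :: w, by simp [hw]⟩ :
      {w : List (Fin Q.numArrows) // w.length = l + 1}))
    rw [wordMap_cons, Module.End.mul_eq_comp, LinearMap.range_comp]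

lemma radPow_succ_le (x : RepSpace Q d K) (l : ℕ) :
    radPow Q d K x (l+1) ≤ radPow Q d K x l := by
  induction l with
  | zero => rw [radPow_zero]; exact le_top
  | succ l ih =>
    rw [radPow_succ Q d K x (l+1)]
    conv_rhs => rw [radPow_succ Q d K x l]
    exact iSup_mono fun a => Submodule.map_mono ih

lemma proj_arrow (x : RepSpace Q d K) (a : Fin Q.numArrows) (i : Fin Q.n) :
    proj Q d K i ∘ₗ arrowMap Q d K x a = if Q.tgt a = i then arrowMap Q d K x a else 0 := by
  ext m jv
  by_cases h : Q.tgt a = i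
  · subst h
    by_cases h2 : jv.1 = Q.tgt a <;> simp [proj, arrowMap, h2]
  · by_cases h2 : jv.1 = i
    · have : ¬ jv.1 = Q.tgt a := fun h3 => h (h3.symm.trans h2)
      simp [proj, arrowMap, h, this]
    · simp [proj, h, h2]

lemma arrow_proj (x : RepSpace Q d K) (a : Fin Q.numArrows) :
    arrowMap Q d K x a ∘ₗ proj Q d K (Q.src a) = arrowMap Q d K x a := by
  refine LinearMap.ext fun m => ?_
  funext jv
  simp [proj, arrowMap]

lemma map_proj_radPow_succ (x : RepSpace Q d K) (l : ℕ) (i : Fin Q.n) :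
    (radPow Q d K x (l+1)).map (proj Q d K i) =
      ⨆ a ∈ Finset.univ.filter (fun a => Q.tgt a = i),
        ((radPow Q d K x l).map (proj Q d K (Q.src a))).map (arrowMap Q d K x a) := by
  rw [radPow_succ, Submodule.map_iSup]
  refine iSup_congr fun a => ?_
  rw [← Submodule.map_comp, ← Submodule.map_comp, proj_arrow, arrow_proj]
  by_cases h : Q.tgt a = i <;> simp [h]

lemma vdim_step (x : RepSpace Q d K) (l : ℕ) (i : Fin Q.n) :
    vdim Q d K (radPow Q d K x (l+1)) i - vdim Q d K (radPow Q d K x (l+2)) i ≤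
      ∑ a ∈ Finset.univ.filter (fun a => Q.tgt a = i),
        (vdim Q d K (radPow Q d K x l) (Q.src a) -
          vdim Q d K (radPow Q d K x (l+1)) (Q.src a)) := by
  have key := finrank_iSup_finset_le (Finset.univ.filter (fun a => Q.tgt a = i))
    (fun a => ((radPow Q d K x l).map (proj Q d K (Q.src a))).map (arrowMap Q d K x a))
    (fun a => ((radPow Q d K x (l+1)).map (proj Q d K (Q.src a))).map (arrowMap Q d K x a))
    (fun a => vdim Q d K (radPow Q d K x l) (Q.src a) -
          vdim Q d K (radPow Q d K x (l+1)) (Q.src a))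
    ((radPow Q d K x (l+2)).map (proj Q d K i))
    (fun a _ => exists_compl_map _ _ _ (Submodule.map_mono (radPow_succ_le Q d K x l)))
    (by
      intro a ha
      rw [map_proj_radPow_succ Q d K x (l+1) i]
      exact le_iSup₂_of_le a ha le_rfl)
  rw [← map_proj_radPow_succ] at key
  rw [sup_eq_right.mpr (Submodule.map_mono (radPow_succ_le Q d K x (l+1)))] at key
  simp only [vdim] at key ⊢
  omega

lemma necessity (L : ℕ) (x : RepSpace Q d K) (l : Fin L) (i : Fin Q.n) :
    radLayering Q d K L x l.succ i ≤
      ∑ a ∈ Finset.univ.filter (fun a => Q.tgt a = i),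
        radLayering Q d K L x l.castSucc (Q.src a) := by
  have := vdim_step Q d K x l i
  simpa [radLayering] using this

/-! ## Sufficiency -/

lemma map_proj_suppSub (T : (Σ i : Fin Q.n, Fin (d i)) → Prop) (i : Fin Q.n) :
    (suppSub K _ T).map (proj Q d K i) = suppSub K _ (fun j => T j ∧ j.1 = i) := by
  apply le_antisymm
  · rintro _ ⟨m, hm, rfl⟩ j hj
    by_cases h : j.1 = i
    · have : ¬ T j := fun h' => hj ⟨h', h⟩
      simp [proj, hm j this]
    · simp [proj, h]
  · intro m hm
    refine ⟨m, fun j hj => hm j fun h => hj h.1, ?_⟩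
    funext j
    by_cases h : j.1 = i
    · simp [proj, h]
    · simp [proj, h, hm j fun h' => h h'.2]

open Classical in
lemma vdim_suppSub (T : (Σ i : Fin Q.n, Fin (d i)) → Prop) (i : Fin Q.n) :
    vdim Q d K (suppSub K _ T) i = Nat.card {v : Fin (d i) // T ⟨i, v⟩} := by
  rw [vdim, map_proj_suppSub, finrank_suppSub]
  refine Nat.card_congr
    { toFun := fun j => ⟨Fin.cast (congrArg d j.2.2) j.1.2, by
        obtain ⟨⟨k, v⟩, h1, h2⟩ := j
        dsimp only at h2
        subst h2
        exact h1⟩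
      invFun := fun v => ⟨⟨i, v.1⟩, v.2, rfl⟩
      left_inv := by
        rintro ⟨⟨k, v⟩, h1, h2⟩
        dsimp only at h2
        subst h2
        rfl
      right_inv := by
        rintro ⟨v, h1⟩
        rfl }

open Classical in
/-- The representation attached to a parent relation. -/
noncomputable def parentRep (P : ∀ i : Fin Q.n, Fin (d i) →
    (Σ a : Fin Q.numArrows, Fin (d (Q.src a))) → Prop) : RepSpace Q d K :=
  fun c => if P (Q.tgt c.1) c.2.1 ⟨c.1, c.2.2⟩ then 1 else 0

lemma radPow_parentRep (P : ∀ i : Fin Q.n, Fin (d i) →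
    (Σ a : Fin Q.numArrows, Fin (d (Q.src a))) → Prop)
    (lay : ∀ i : Fin Q.n, Fin (d i) → ℕ)
    (h1 : ∀ i v aw, P i v aw → Q.tgt aw.1 = i ∧ lay i v = lay _ aw.2 + 1)
    (h2 : ∀ i v, 0 < lay i v → ∃ aw, P i v aw)
    (h3 : ∀ i v v' aw, P i v aw → P i v' aw → v = v') (l : ℕ) :
    radPow Q d K (parentRep Q d K P) l = suppSub K _ (fun j => l ≤ lay j.1 j.2) := by
  classical
  induction l with
  | zero =>
    rw [radPow_zero, eq_comm, eq_top_iff]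
    intro m _ j hj
    exact absurd (Nat.zero_le _) hj
  | succ l ih =>
    rw [radPow_succ, ih]
    apply le_antisymm
    · refine iSup_le fun a => ?_
      rintro _ ⟨m, hm, rfl⟩ ⟨j, v⟩ hj
      by_cases h : j = Q.tgt a
      · subst h
        simp only [arrowMap, LinearMap.coe_mk, AddHom.coe_mk, dite_true]
        refine Finset.sum_eq_zero fun w _ => ?_
        by_cases hP : P (Q.tgt a) v ⟨a, w⟩
        · have := (h1 _ _ _ hP).2
          have hw : ¬ l ≤ lay (Q.src a) w := by
            intro hw
            apply hj
            dsimp only at this ⊢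
            omega
          rw [hm ⟨Q.src a, w⟩ hw, mul_zero]
        · have : parentRep Q d K P ⟨a, (v, w)⟩ = 0 := by simp [parentRep, hP]
          simp [this]
      · simp [arrowMap, h]
    · refine suppSub_le ?_
      rintro ⟨i, v⟩ hv
      dsimp only at hv
      obtain ⟨⟨a, w⟩, hP⟩ := h2 i v (by omega)
      obtain ⟨ht, hl⟩ := h1 _ _ _ hP
      dsimp only at ht hl
      subst ht
      refine Submodule.mem_iSup_of_mem a ⟨Pi.single ⟨Q.src a, w⟩ 1, ?_, ?_⟩
      · intro j hj
        rw [Pi.single_apply, if_neg]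
        rintro rfl
        apply hj
        dsimp only
        omega
      · funext ⟨j, u⟩
        by_cases h : j = Q.tgt a
        · subst h
          simp only [arrowMap, LinearMap.coe_mk, AddHom.coe_mk, dite_true]
          rw [Finset.sum_eq_single w]
          · by_cases hu : u = v
            · subst hu
              simp [parentRep, hP]
            · have hn : ¬ P (Q.tgt a) u ⟨a, w⟩ := fun h' => hu (h3 _ _ _ _ h' hP)
              have hne : (⟨Q.tgt a, u⟩ : Σ i : Fin Q.n, Fin (d i)) ≠ ⟨Q.tgt a, v⟩ := by
                intro h'
                apply hu
                simpa using h'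
              simp [parentRep, hn, Pi.single_apply, hne]
          · intro w' _ hw'
            have hne : (⟨Q.src a, w'⟩ : Σ i : Fin Q.n, Fin (d i)) ≠ ⟨Q.src a, w⟩ := by
              intro h'
              apply hw'
              simpa using h'
            simp [Pi.single_apply, hne]
          · intro h'
            exact absurd (Finset.mem_univ _) h'
        · have hne : (⟨j, u⟩ : Σ i : Fin Q.n, Fin (d i)) ≠ ⟨Q.tgt a, v⟩ := by
            intro h'
            exact h (congrArg Sigma.fst h')
          simp [arrowMap, h, Pi.single_apply, hne]

open Classical in
lemma exists_lay {n L : ℕ} (S : Fin (L+1) → Fin n → ℕ) (d : Fin n → ℕ)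
    (hd : ∀ i, ∑ l, S l i = d i) :
    ∃ lay : ∀ i : Fin n, Fin (d i) → ℕ, (∀ i v, lay i v ≤ L) ∧
      ∀ (l : Fin (L+1)) i, Fintype.card {v : Fin (d i) // lay i v = l} = S l i := by
  have e : ∀ i, Nonempty ((Σ l : Fin (L+1), Fin (S l i)) ≃ Fin (d i)) := fun i =>
    ⟨(finSigmaFinEquiv).trans (finCongr (hd i))⟩
  refine ⟨fun i v => (((Classical.choice (e i)).symm v).1 : ℕ), fun i v => ?_, fun l i => ?_⟩
  · exact Nat.lt_succ_iff.mp (Fin.is_lt _)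
  · rw [← Nat.card_eq_fintype_card]
    dsimp only
    generalize Classical.choice (e i) = f
    have key : ∀ s t : (Σ l : Fin (L+1), Fin (S l i)), s = t → (s.2 : ℕ) = t.2 := by
      rintro s _ rfl
      rfl
    conv_rhs => rw [← Nat.card_fin (S l i)]
    refine (Nat.card_congr
      { toFun := fun p => ⟨f ⟨l, p⟩, by simp⟩
        invFun := fun v => Fin.cast (congrArg (fun k => S k i) (Fin.ext v.2)) (f.symm v.1).2
        left_inv := ?_
        right_inv := ?_ }).symm
    · intro p
      apply Fin.ext
      exact key _ _ (f.symm_apply_apply ⟨l, p⟩)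
    · rintro ⟨v, hv⟩
      obtain ⟨⟨k, q⟩, rfl⟩ := f.surjective v
      apply Subtype.ext
      have hk : k = l := by
        apply Fin.ext
        simpa using hv
      subst hk
      dsimp only
      congr 2
      apply Fin.ext
      exact key _ _ (f.symm_apply_apply ⟨k, q⟩)

lemma sufficiency (L : ℕ) (S : Fin (L+1) → Fin Q.n → ℕ) (hd : ∀ i, ∑ l, S l i = d i)
    (hS : ∀ (l : Fin L) (i : Fin Q.n), S l.succ i ≤
        ∑ a ∈ Finset.univ.filter (fun a => Q.tgt a = i), S l.castSucc (Q.src a)) :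
    ∃ x ∈ TruncRepVar Q d K L, radLayering Q d K L x = S := by
  classical
  obtain ⟨lay, hL, hcard⟩ := exists_lay S d hd
  have emb : ∀ (k : ℕ) (i : Fin Q.n), Nonempty ({v : Fin (d i) // lay i v = k + 1} ↪
      (Σ a : {a // Q.tgt a = i}, {w : Fin (d (Q.src a.1)) // lay _ w = k})) := by
    intro k i
    apply Function.Embedding.nonempty_of_card_le
    by_cases hk : k < L
    · have h1 := hcard (Fin.succ ⟨k, hk⟩) i
      have h2 := fun j => hcard (Fin.castSucc ⟨k, hk⟩) j
      simp only [Fin.val_succ, Fin.val_castSucc] at h1 h2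
      rw [Fintype.card_sigma, h1]
      simp only [h2]
      refine (hS ⟨k, hk⟩ i).trans (le_of_eq ?_)
      rw [Finset.sum_subtype (Finset.univ.filter (fun a => Q.tgt a = i))
        (p := fun a => Q.tgt a = i) (by simp)]
    · have : IsEmpty {v : Fin (d i) // lay i v = k + 1} := by
        refine ⟨fun v => ?_⟩
        have := hL i v.1
        have := v.2
        omega
      simp
  let pp := fun k i => Classical.choice (emb k i)
  let P : ∀ i : Fin Q.n, Fin (d i) → (Σ a : Fin Q.numArrows, Fin (d (Q.src a))) → Prop :=
    fun i v aw => ∃ (k : ℕ) (h : lay i v = k + 1),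
      (⟨(pp k i ⟨v, h⟩).1.1, (pp k i ⟨v, h⟩).2.1⟩ :
        Σ a : Fin Q.numArrows, Fin (d (Q.src a))) = aw
  have h1 : ∀ i v aw, P i v aw → Q.tgt aw.1 = i ∧ lay i v = lay _ aw.2 + 1 := by
    rintro i v _ ⟨k, h, rfl⟩
    refine ⟨(pp k i ⟨v, h⟩).1.2, ?_⟩
    rw [h, (pp k i ⟨v, h⟩).2.2]
  have h2 : ∀ i v, 0 < lay i v → ∃ aw, P i v aw := by
    intro i v hv
    exact ⟨_, lay i v - 1, by omega, rfl⟩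
  have h3 : ∀ i v v' aw, P i v aw → P i v' aw → v = v' := by
    intro i v v' aw hv hv'
    have e1 := (h1 _ _ _ hv).2
    have e2 := (h1 _ _ _ hv').2
    obtain ⟨k, h, hk⟩ := hv
    obtain ⟨k', h', hk'⟩ := hv'
    obtain rfl : k = k' := by omega
    have : pp k i ⟨v, h⟩ = pp k i ⟨v', h'⟩ := by
      have hh := hk.trans hk'.symm
      generalize pp k i ⟨v, h⟩ = s at hh
      generalize pp k i ⟨v', h'⟩ = t at hh
      obtain ⟨⟨a, ha⟩, ⟨w, hw⟩⟩ := s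
      obtain ⟨⟨b, hb⟩, ⟨u, hu⟩⟩ := t
      simp only [Sigma.mk.injEq] at hh
      obtain ⟨rfl, hh⟩ := hh
      simp only [heq_eq_eq] at hh
      subst hh
      rfl
    simpa using (pp k i).injective this
  have hrad := radPow_parentRep Q d K P lay h1 h2 h3
  refine ⟨parentRep Q d K P, ?_, ?_⟩
  · intro w hw
    rw [← LinearMap.range_eq_bot, eq_bot_iff]
    refine (le_iSup (fun w : {w : List (Fin Q.numArrows) // w.length = L + 1} =>
        LinearMap.range (wordMap Q d K (parentRep Q d K P) w.1)) ⟨w, hw⟩).trans ?_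
    change radPow Q d K _ (L+1) ≤ ⊥
    rw [hrad]
    intro m hm
    rw [Submodule.mem_bot]
    funext j
    refine hm j ?_
    have := hL j.1 j.2
    omega
  · funext l i
    rw [radLayering, hrad, hrad, vdim_suppSub, vdim_suppSub, ← hcard l i]
    simp only [Nat.card_eq_fintype_card, Fintype.card_subtype]
    have : Finset.univ.filter (fun v : Fin (d i) => (l : ℕ) ≤ lay i v) =
        Finset.univ.filter (fun v : Fin (d i) => lay i v = l) ∪
        Finset.univ.filter (fun v : Fin (d i) => (l : ℕ) + 1 ≤ lay i v) := by
      ext v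
      simp only [Finset.mem_filter, Finset.mem_univ, true_and, Finset.mem_union]
      omega
    rw [this, Finset.card_union_of_disjoint, Nat.add_sub_cancel]
    rw [Finset.disjoint_filter]
    intro v _ hv
    omega

end gen

end QuiverData

open QuiverData in
/-- Realizability criterion over a truncated path algebra: a semisimple
sequence `S = (S_0, …, S_L)` is realizable iff each consecutive pair `(S_l, S_{l+1})` is
realizable over `Λ/J²` iff `dim S_{l+1} ≤ (dim S_l)·A` componentwise for all `l < L`
(`A` the adjacency matrix). (Stated as (i) ↔ (iii) and (ii) ↔ (iii).) -/
theorem statement_10 (K : Type) [Field K] [IsAlgClosed K]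
    (Q : QuiverData) (L : ℕ) (hL : 0 < L)
    (S : Fin (L+1) → Fin Q.n → ℕ) :
    ((∃ x ∈ TruncRepVar Q (fun i => ∑ l, S l i) K L,
        radLayering Q (fun i => ∑ l, S l i) K L x = S) ↔
      ∀ (l : Fin L) (i : Fin Q.n), S l.succ i ≤
        ∑ a ∈ Finset.univ.filter (fun a => Q.tgt a = i), S l.castSucc (Q.src a)) ∧
    ((∀ l : Fin L, ∃ x ∈ TruncRepVar Q (fun i => S l.castSucc i + S l.succ i) K 1,
        radLayering Q (fun i => S l.castSucc i + S l.succ i) K 1 x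
          = ![S l.castSucc, S l.succ]) ↔
      ∀ (l : Fin L) (i : Fin Q.n), S l.succ i ≤
        ∑ a ∈ Finset.univ.filter (fun a => Q.tgt a = i), S l.castSucc (Q.src a)) := by
  refine ⟨⟨?_, ?_⟩, ⟨?_, ?_⟩⟩
  · rintro ⟨x, -, hx⟩ l i
    have := necessity Q _ K L x l i
    rwa [hx] at this
  · intro h
    exact sufficiency Q _ K L S (fun _ => rfl) h
  · intro h l i
    obtain ⟨x, -, hx⟩ := h l
    have := necessity Q _ K 1 x 0 i
    rw [hx] at this
    simpa using this
  · intro h l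
    refine sufficiency Q _ K 1 ![S l.castSucc, S l.succ] (fun i => by simp) ?_
    intro k i
    fin_cases k
    simpa using h l i
end

section
/- Let Λ = KQ/⟨all paths of length L+1⟩ be a truncated path algebra over an algebraically closed field, B the transpose of the adjacency matrix of Q, S = (S_0,…,S_L) a realizable semisimple sequence with the convention S_{L+1} = 0, and let S* = (S*_0,…,S*_L) be the generic socle layering of the modules in Rep S. Then the generic socle S*_0 is determined by its dimension vector: dim S*_0 = sup{ Σ_{l=L−j}^{L} ( dim S_l − (dim S_{l+1})·B ) : 0 ≤ j ≤ L }, the supremum being taken componentwise in Z^n. -/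
open Finset

/-- The semisimple sequence `S`, extended by `0` beyond index `L` and recorded over `ℤ`
(CONTEXT for Statement 11: the convention `S_{L+1} = 0`). -/
def seqZ (Q : QuiverData) (L : ℕ) (S : Fin (L+1) → Fin Q.n → ℕ) (l : ℕ) :
    Fin Q.n → ℤ :=
  fun i => if h : l < L + 1 then (S ⟨l, h⟩ i : ℤ) else 0

namespace GenSocAux

section LA
variable {K : Type} [Field K]

/-- `1 + tC` is injective for all but finitely many `t`. -/
lemma finite_bad {E : Type} [AddCommGroup E] [Module K E] [FiniteDimensional K E]
    (C : Module.End K E) :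
    {t : K | ¬ Function.Injective (fun v => v + t • C v)}.Finite := by
  have hfin : {μ : K | C.HasEigenvalue μ}.Finite := Module.End.finite_hasEigenvalue C
  refine (hfin.image (fun μ => -μ⁻¹)).subset ?_
  intro t ht
  simp only [Set.mem_ofPred_eq] at ht
  have hlin : ¬ Function.Injective (LinearMap.id + t • C : E →ₗ[K] E) := ht
  rw [← LinearMap.ker_eq_bot, Submodule.eq_bot_iff] at hlin
  push Not at hlin
  obtain ⟨v, hv, hv0⟩ := hlin
  have hv' : v + t • C v = 0 := by simpa using hv
  have ht0 : t ≠ 0 := by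
    rintro rfl
    simp at hv'; exact hv0 hv'
  refine ⟨-t⁻¹, ?_, by simp⟩
  refine Module.End.hasEigenvalue_of_hasEigenvector (x := v) ⟨?_, hv0⟩
  rw [Module.End.mem_eigenspace_iff]
  have : t • C v = -v := by rw [eq_neg_iff_add_eq_zero, add_comm]; exact hv'
  calc C v = t⁻¹ • (t • C v) := by rw [smul_smul, inv_mul_cancel₀ ht0, one_smul]
    _ = _ := by rw [this]; simp

/-- Surjectivity is a generic condition. -/
lemma generic_surj {E F : Type} [AddCommGroup E] [Module K E]
    [AddCommGroup F] [Module K F] [FiniteDimensional K F]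
    (A B : E →ₗ[K] F) (hA : Function.Surjective A) :
    {t : K | ¬ Function.Surjective (A + t • B)}.Finite := by
  obtain ⟨g, hg⟩ := A.exists_rightInverse_of_surjective (LinearMap.range_eq_top.2 hA)
  refine (finite_bad (B ∘ₗ g)).subset ?_
  intro t ht hinj
  apply ht
  have h1 : Function.Injective (LinearMap.id + t • (B ∘ₗ g) : F →ₗ[K] F) := hinj
  have h2 := LinearMap.injective_iff_surjective.1 h1
  intro y
  obtain ⟨z, hz⟩ := h2 y
  refine ⟨g z, ?_⟩
  have : A (g z) = z := LinearMap.congr_fun hg z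
  simpa [this] using hz

/-- The dimension of the kernel of a generic perturbation does not increase. -/
lemma generic_ker {E F : Type} [AddCommGroup E] [Module K E] [FiniteDimensional K E]
    [AddCommGroup F] [Module K F] (A B : E →ₗ[K] F) :
    {t : K | ¬ Module.finrank K (LinearMap.ker (A + t • B)) ≤
      Module.finrank K (LinearMap.ker A)}.Finite := by
  obtain ⟨E', hE'⟩ := Submodule.exists_isCompl (LinearMap.ker A)
  have hinjA : LinearMap.ker (A ∘ₗ E'.subtype) = ⊥ := by
    rw [Submodule.eq_bot_iff]
    intro v hv
    have h1 : (v : E) ∈ LinearMap.ker A ⊓ E' := ⟨by simpa using hv, v.2⟩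
    rw [hE'.inf_eq_bot] at h1
    exact Subtype.ext (by simpa using h1)
  obtain ⟨g, hg⟩ := LinearMap.exists_leftInverse_of_injective _ hinjA
  refine (finite_bad (g ∘ₗ B ∘ₗ E'.subtype)).subset ?_
  intro t ht hinj
  apply ht
  have hdis : LinearMap.ker (A + t • B) ⊓ E' = ⊥ := by
    rw [Submodule.eq_bot_iff]
    rintro v ⟨hv, hvE⟩
    have h0 : (⟨v, hvE⟩ : E') = 0 := by
      apply hinj
      have h2 : A v + t • B v = 0 := by simpa using hv
      have h3 : g (A v) = ⟨v, hvE⟩ := LinearMap.congr_fun hg ⟨v, hvE⟩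
      have h4 : g (A v) + t • g (B v) = 0 := by
        rw [← map_smul, ← map_add, h2, map_zero]
      rw [h3] at h4
      simpa using h4
    exact congrArg Subtype.val h0
  have h1 := Submodule.finrank_sup_add_finrank_inf_eq (LinearMap.ker (A + t • B)) E'
  have h2 := Submodule.finrank_add_eq_of_isCompl hE'
  rw [hdis, finrank_bot] at h1
  have h3 := Submodule.finrank_le (LinearMap.ker (A + t • B) ⊔ E')
  omega

lemma generic_span {ι V : Type} [Fintype ι] [DecidableEq ι] [AddCommGroup V] [Module K V]
    [FiniteDimensional K V]
    (A B : ι → V →ₗ[K] V) (N₀ N₁ : Submodule K V)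
    (hA : ⨆ a, N₀.map (A a) = N₁) (hB : ∀ a, N₀.map (B a) ≤ N₁) :
    {t : K | ¬ ⨆ a, N₀.map (A a + t • B a) = N₁}.Finite := by
  have hA' : ∀ a, N₀.map (A a) ≤ N₁ := fun a => hA ▸ le_iSup (fun a => N₀.map (A a)) a
  have key : ∀ C : ι → V →ₗ[K] V, ∀ y, y ∈ ⨆ a, N₀.map (C a) ↔
      ∃ τ : ι → N₀, ∑ a, C a (τ a) = y := by
    intro C y
    rw [Submodule.mem_iSup_iff_exists_finsupp]
    constructor
    · rintro ⟨f, hf, hs⟩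
      choose τ hτ hτ' using hf
      refine ⟨fun a => ⟨τ a, hτ a⟩, ?_⟩
      simp only [hτ']
      rw [← hs, Finsupp.sum_fintype _ _ (by simp)]
    · rintro ⟨τ, hs⟩
      refine ⟨Finsupp.equivFunOnFinite.symm (fun a => C a (τ a)), ?_, ?_⟩
      · intro a; exact ⟨τ a, (τ a).2, rfl⟩
      · rw [Finsupp.sum_fintype _ _ (by simp)]; simpa using hs
  let Φ : ∀ C : ι → V →ₗ[K] V, (∀ a, N₀.map (C a) ≤ N₁) → ((ι → N₀) →ₗ[K] N₁) :=
    fun C hC => ∑ a, (((C a).restrict (p := N₀) (q := N₁)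
      (fun v hv => hC a ⟨v, hv, rfl⟩)) ∘ₗ LinearMap.proj a)
  have hΦ : ∀ C hC τ, ((Φ C hC τ : N₁) : V) = ∑ a, C a (τ a) := by
    intro C hC τ
    simp [Φ, LinearMap.sum_apply]
  have hsurj : Function.Surjective (Φ A hA') := by
    rintro ⟨y, hy⟩
    rw [← hA, key] at hy
    obtain ⟨τ, hτ⟩ := hy
    exact ⟨τ, Subtype.ext (by rw [hΦ]; exact hτ)⟩
  refine (generic_surj (Φ A hA') (Φ B hB) hsurj).subset ?_
  intro t ht hs
  apply ht
  apply le_antisymm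
  · refine iSup_le fun a => ?_
    rintro _ ⟨v, hv, rfl⟩
    exact N₁.add_mem (hA' a ⟨v, hv, rfl⟩) (N₁.smul_mem t (hB a ⟨v, hv, rfl⟩))
  · intro y hy
    rw [key]
    obtain ⟨τ, hτ⟩ := hs ⟨y, hy⟩
    refine ⟨τ, ?_⟩
    have := congrArg Subtype.val hτ
    simp only [LinearMap.add_apply, LinearMap.smul_apply, Submodule.coe_add,
      Submodule.coe_smul, hΦ] at this
    rw [← this]
    simp [Finset.sum_add_distrib, Finset.smul_sum]

lemma exists_inj {C D : Type} [AddCommGroup C] [Module K C] [FiniteDimensional K C]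
    [AddCommGroup D] [Module K D] [FiniteDimensional K D]
    (h : Module.finrank K C ≤ Module.finrank K D) :
    ∃ f : C →ₗ[K] D, Function.Injective f := by
  let b := Module.finBasis K C
  let c := Module.finBasis K D
  refine ⟨b.constr K (fun i => c (Fin.castLE h i)), ?_⟩
  have hli : LinearIndependent K (fun i => c (Fin.castLE h i)) :=
    c.linearIndependent.comp _ (Fin.castLE_injective h)
  rw [← LinearMap.ker_eq_bot, Submodule.eq_bot_iff]
  intro v hv
  rw [LinearMap.mem_ker, Module.Basis.constr_apply_fintype] at hv
  have h0 := Fintype.linearIndependent_iff.1 hli _ hv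
  exact b.equivFun.map_eq_zero_iff.1 (funext h0)

/-- A linear map on a finite-dimensional space into another of maximal rank. -/
lemma exists_inj_or_surj {C D : Type} [AddCommGroup C] [Module K C] [FiniteDimensional K C]
    [AddCommGroup D] [Module K D] [FiniteDimensional K D] :
    ∃ f : C →ₗ[K] D, Function.Injective f ∨ Function.Surjective f := by
  rcases le_total (Module.finrank K C) (Module.finrank K D) with h | h
  · obtain ⟨f, hf⟩ := exists_inj (K := K) h
    exact ⟨f, Or.inl hf⟩
  · obtain ⟨f, hf⟩ := exists_inj (K := K) h
    obtain ⟨g, hg⟩ := LinearMap.exists_leftInverse_of_injective f (LinearMap.ker_eq_bot.2 hf)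
    exact ⟨g, Or.inr fun y => ⟨f y, LinearMap.congr_fun hg y⟩⟩

/-- Dimension of the kernel of a restriction. -/
lemma finrank_ker_domRestrict {V T : Type} [AddCommGroup V] [Module K V]
    [AddCommGroup T] [Module K T] (χ : V →ₗ[K] T) (U : Submodule K V) :
    Module.finrank K (LinearMap.ker (χ.domRestrict U)) =
      Module.finrank K (LinearMap.ker χ ⊓ U : Submodule K V) := by
  have h : (LinearMap.ker (χ.domRestrict U)).map U.subtype = LinearMap.ker χ ⊓ U := by
    ext v
    simp [and_comm]
  rw [← h]
  exact (LinearEquiv.finrank_eq (Submodule.equivMapOfInjective _ U.subtype_injective _))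

lemma filtered_map {V T : Type} [AddCommGroup V] [Module K V] [FiniteDimensional K V]
    [AddCommGroup T] [Module K T] [FiniteDimensional K T]
    (U : ℕ → Submodule K V) (W : ℕ → Submodule K T) (hU : Antitone U) (hW : Antitone W)
    (L : ℕ) (hWL : W L = ⊥) (k : ℕ) (hk : k ≤ L) :
    ∃ ψ : V →ₗ[K] T, (∀ m, L - k ≤ m → m ≤ L → (U m).map ψ ≤ W m) ∧
      ∃ m, m ≤ L ∧ Module.finrank K (LinearMap.ker ψ ⊓ U (L - k) : Submodule K V) +
        Module.finrank K (W m) ≤ Module.finrank K (U m) := by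
  induction k with
  | zero =>
    refine ⟨0, by simp, L, le_rfl, ?_⟩
    have h1 : Module.finrank K (W L) = 0 := by rw [hWL]; simp
    rw [Nat.sub_zero, h1, add_zero]
    exact Submodule.finrank_mono inf_le_right
  | succ k ih =>
    obtain ⟨ψ, hψ, m, hm, hdim⟩ := ih (by omega)
    set l := L - (k+1) with hl
    have hl1 : L - k = l + 1 := by omega
    rw [hl1] at hψ hdim
    have hle : U (l+1) ≤ U l := hU (Nat.le_succ l)
    have hWle : W (l+1) ≤ W l := hW (Nat.le_succ l)
    -- complement of `U (l+1)` in `V`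
    obtain ⟨P, hP⟩ := Submodule.exists_isCompl (U (l+1))
    set C : Submodule K V := P ⊓ U l with hC
    set R : Submodule K T := (U (l+1)).map ψ with hR
    have hRW : R ≤ W (l+1) := hψ (l+1) le_rfl (by omega)
    obtain ⟨P', hP'⟩ := Submodule.exists_isCompl R
    set D : Submodule K T := P' ⊓ W l with hD
    obtain ⟨f, hf⟩ := exists_inj_or_surj (K := K) (C := C) (D := D)
    obtain ⟨pC, hpC⟩ := LinearMap.exists_leftInverse_of_injective C.subtype
      (Submodule.ker_subtype C)
    have hpC' : ∀ c (hc : c ∈ C), pC c = ⟨c, hc⟩ := fun c hc =>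
      LinearMap.congr_fun hpC ⟨c, hc⟩
    let q := Submodule.projectionOnto (U (l+1)) P hP
    let q' := Submodule.projectionOnto P (U (l+1)) hP.symm
    let χ : V →ₗ[K] T := ψ ∘ₗ (U (l+1)).subtype ∘ₗ q +
      D.subtype ∘ₗ f ∘ₗ pC ∘ₗ P.subtype ∘ₗ q'
    have hχU : ∀ v ∈ U (l+1), χ v = ψ v := by
      intro v hv
      have h1 : q v = ⟨v, hv⟩ := Submodule.projectionOnto_apply_left hP ⟨v, hv⟩
      have h2 : q' v = 0 := (Submodule.projectionOnto_apply_eq_zero_iff hP.symm).2 hv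
      simp [χ, h1, h2]
    have hχC : ∀ c (hc : c ∈ C), χ c = f ⟨c, hc⟩ := by
      intro c hc
      have h1 : q c = 0 := (Submodule.projectionOnto_apply_eq_zero_iff hP).2 hc.1
      have h2 : q' c = ⟨c, hc.1⟩ := Submodule.projectionOnto_apply_left hP.symm ⟨c, hc.1⟩
      simp [χ, h1, h2, hpC' c hc]
    have hdec : ∀ v ∈ U l, ∃ u ∈ U (l+1), ∃ c ∈ C, u + c = v := by
      intro v hv
      have : v ∈ U (l+1) ⊔ P := by rw [hP.sup_eq_top]; trivial
      obtain ⟨u, hu, c, hc, rfl⟩ := Submodule.mem_sup.1 this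
      exact ⟨u, hu, c, ⟨hc, by simpa using (U l).sub_mem hv (hle hu)⟩, rfl⟩
    have hdecW : ∀ v ∈ W l, ∃ u ∈ R, ∃ c ∈ D, u + c = v := by
      intro v hv
      have : v ∈ R ⊔ P' := by rw [hP'.sup_eq_top]; trivial
      obtain ⟨u, hu, c, hc, rfl⟩ := Submodule.mem_sup.1 this
      exact ⟨u, hu, c, ⟨hc, by simpa using (W l).sub_mem hv (hWle (hRW hu))⟩, rfl⟩
    have hmapl : (U l).map χ ≤ W l := by
      rintro _ ⟨v, hv, rfl⟩
      obtain ⟨u, hu, c, hc, rfl⟩ := hdec v hv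
      rw [map_add, hχU u hu, hχC c hc]
      exact (W l).add_mem (hWle (hRW ⟨u, hu, rfl⟩)) (f ⟨c, hc⟩).2.2
    refine ⟨χ, ?_, ?_⟩
    · intro j hj1 hj2
      rcases Nat.eq_or_lt_of_le hj1 with h | h
      · rw [← h]; exact hmapl
      · have h' : U j ≤ U (l+1) := hU h
        rintro _ ⟨v, hv, rfl⟩
        rw [hχU v (h' hv)]
        exact hψ j h hj2 ⟨v, hv, rfl⟩
    · rcases hf with hf | hf
      · refine ⟨m, hm, le_trans (Nat.add_le_add_right ?_ _) hdim⟩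
        apply Submodule.finrank_mono
        rintro v ⟨hv0, hv⟩
        obtain ⟨u, hu, c, hc, rfl⟩ := hdec v hv
        have h0 : ψ u + f ⟨c, hc⟩ = 0 := by
          have : χ (u + c) = 0 := hv0
          rwa [map_add, hχU u hu, hχC c hc] at this
        have h1 : ((f ⟨c, hc⟩ : D) : T) ∈ R ⊓ P' := by
          refine ⟨?_, (f ⟨c, hc⟩).2.1⟩
          rw [eq_neg_of_add_eq_zero_right h0]
          exact R.neg_mem ⟨u, hu, rfl⟩
        rw [hP'.inf_eq_bot] at h1
        have h2 : f ⟨c, hc⟩ = 0 := Subtype.ext (by simpa using h1)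
        have h3 : (⟨c, hc⟩ : C) = 0 := hf (by rw [h2, map_zero])
        have h4 : c = 0 := congrArg Subtype.val h3
        subst h4
        rw [h2] at h0
        refine ⟨?_, by simpa using hu⟩
        simpa using h0
      · refine ⟨l, by omega, ?_⟩
        have hsurj : (U l).map χ = W l := by
          refine le_antisymm hmapl ?_
          intro w hw
          obtain ⟨r, ⟨u, hu, rfl⟩, c, hc, rfl⟩ := hdecW w hw
          obtain ⟨⟨c', hc'⟩, h'⟩ := hf ⟨c, hc⟩
          refine ⟨u + c', (U l).add_mem (hle hu) hc'.2, ?_⟩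
          rw [map_add, hχU u hu, hχC c' hc', h']
        have h1 := LinearMap.finrank_range_add_finrank_ker (χ.domRestrict (U l))
        have h2 : LinearMap.range (χ.domRestrict (U l)) = W l := by
          rw [← hsurj]
          ext w; simp [LinearMap.domRestrict_apply]
        rw [h2, finrank_ker_domRestrict] at h1
        omega

lemma finrank_submodule_pi {ι V : Type} [Fintype ι] [AddCommGroup V] [Module K V]
    [FiniteDimensional K V] (N : ι → Submodule K V) :
    Module.finrank K (Submodule.pi Set.univ N) = ∑ a, Module.finrank K (N a) := by
  rw [← Module.finrank_pi_fintype K]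
  refine LinearEquiv.finrank_eq
    { toFun := fun τ a => ⟨τ.1 a, τ.2 a trivial⟩
      invFun := fun τ => ⟨fun a => τ a, fun a _ => (τ a).2⟩
      map_add' := fun _ _ => rfl
      map_smul' := fun _ _ => rfl
      left_inv := fun _ => rfl
      right_inv := fun _ => rfl }

end LA

section QV
open QuiverData
variable (Q : QuiverData) (d : Fin Q.n → ℕ) (K : Type) [Field K]

lemma proj_apply (i : Fin Q.n) (m : Carrier Q d K) (jv) :
    proj Q d K i m jv = if jv.1 = i then m jv else 0 := rfl

lemma proj_proj (i j : Fin Q.n) (m : Carrier Q d K) :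
    proj Q d K i (proj Q d K j m) = if i = j then proj Q d K j m else 0 := by
  funext jv
  by_cases h : i = j
  · subst h; simp only [if_true, proj_apply]; split_ifs <;> rfl
  · rw [if_neg h]
    simp only [proj_apply]
    split_ifs with h1 h2
    · exact absurd (h1.symm.trans h2) h
    · rfl
    · rfl

lemma proj_arrow (x : RepSpace Q d K) (a : Fin Q.numArrows) (i : Fin Q.n) (m : Carrier Q d K) :
    proj Q d K i (arrowMap Q d K x a m) =
      if Q.tgt a = i then arrowMap Q d K x a m else 0 := by
  funext jv
  rw [proj_apply]
  split_ifs with h1 h2 h2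
  · rfl
  · have : ¬ jv.1 = Q.tgt a := fun h => h2 (h.symm.trans h1)
    simp [arrowMap, this]
  · have : ¬ jv.1 = Q.tgt a := fun h => h1 (h.trans h2)
    simp [arrowMap, this]
  · rfl

lemma arrow_proj (x : RepSpace Q d K) (a : Fin Q.numArrows) (i : Fin Q.n) (m : Carrier Q d K) :
    arrowMap Q d K x a (proj Q d K i m) =
      if Q.src a = i then arrowMap Q d K x a m else 0 := by
  funext jv
  by_cases h : Q.src a = i <;> by_cases h' : jv.1 = Q.tgt a <;>
    simp [arrowMap, proj_apply, h, h']

lemma arrow_lin (x y : RepSpace Q d K) (t : K) (a : Fin Q.numArrows) :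
    arrowMap Q d K (x + t • y) a = arrowMap Q d K x a + t • arrowMap Q d K y a := by
  ext m jv
  by_cases h' : jv.1 = Q.tgt a <;>
    simp [arrowMap, h', add_mul, Finset.sum_add_distrib, Finset.mul_sum, mul_assoc]

lemma exists_rep (f : Fin Q.numArrows → (Carrier Q d K →ₗ[K] Carrier Q d K))
    (h1 : ∀ a m, proj Q d K (Q.tgt a) (f a m) = f a m)
    (h2 : ∀ a m, f a (proj Q d K (Q.src a) m) = f a m) :
    ∃ x : RepSpace Q d K, ∀ a, arrowMap Q d K x a = f a := by
  classical
  refine ⟨fun c => f c.1 (Pi.single ⟨Q.src c.1, c.2.2⟩ 1) ⟨Q.tgt c.1, c.2.1⟩, fun a => ?_⟩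
  refine LinearMap.pi_ext' fun ⟨j, w⟩ => LinearMap.ext_ring ?_
  funext ⟨k, v⟩
  simp only [LinearMap.comp_apply, LinearMap.coe_single]
  by_cases h : k = Q.tgt a
  · subst h
    by_cases hj : j = Q.src a
    · subst hj
      simp only [arrowMap, LinearMap.coe_mk, AddHom.coe_mk, dif_pos]
      rw [Finset.sum_eq_single w]
      · simp
      · intro b _ hb
        rw [Pi.single_eq_of_ne (by simpa using hb), mul_zero]
      · simp
    · have e1 : proj Q d K (Q.src a) (Pi.single (⟨j, w⟩ : Σ i, Fin (d i)) (1 : K)) = 0 := by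
        funext jv
        rw [proj_apply]
        split_ifs with hh
        · rw [Pi.single_eq_of_ne]
          · rfl
          · rintro rfl; exact hj hh
        · rfl
      rw [← h2, e1, map_zero]
      have e2 := arrow_proj Q d K
        (fun c => f c.1 (Pi.single ⟨Q.src c.1, c.2.2⟩ 1) ⟨Q.tgt c.1, c.2.1⟩) a (Q.src a)
        (Pi.single (⟨j, w⟩ : Σ i, Fin (d i)) (1 : K))
      rw [if_pos rfl, e1, map_zero] at e2
      rw [← e2]
  · rw [← h1, proj_apply, if_neg h]
    simp [arrowMap, h]

lemma radPow_zero (x : RepSpace Q d K) : radPow Q d K x 0 = ⊤ := by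
  rw [eq_top_iff]
  refine le_trans ?_ (le_iSup (fun w : {w : List (Fin Q.numArrows) // w.length = 0} =>
    LinearMap.range (wordMap Q d K x w.1)) ⟨[], rfl⟩)
  intro v _
  exact ⟨v, by simp [wordMap]⟩

lemma radPow_succ (x : RepSpace Q d K) (l : ℕ) :
    radPow Q d K x (l+1) = ⨆ a, (radPow Q d K x l).map (arrowMap Q d K x a) := by
  apply le_antisymm
  · refine iSup_le ?_
    rintro ⟨w, hw⟩
    match w, hw with
    | a :: w, hw =>
      have hw' : w.length = l := by simpa using hw
      refine le_trans ?_ (le_iSup _ a)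
      rintro _ ⟨v, rfl⟩
      refine ⟨wordMap Q d K x w v, ?_, by simp [wordMap]⟩
      exact (le_iSup (fun w : {w : List (Fin Q.numArrows) // w.length = l} =>
        LinearMap.range (wordMap Q d K x w.1)) ⟨w, hw'⟩) ⟨v, rfl⟩
  · refine iSup_le fun a => ?_
    rw [radPow, Submodule.map_iSup]
    refine iSup_le ?_
    rintro ⟨w, hw⟩
    refine le_trans ?_ (le_iSup (fun w : {w : List (Fin Q.numArrows) // w.length = l + 1} =>
      LinearMap.range (wordMap Q d K x w.1)) ⟨a :: w, by simp [hw]⟩)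
    rintro _ ⟨_, ⟨v, rfl⟩, rfl⟩
    exact ⟨v, by simp [wordMap]⟩

lemma radPow_anti_succ (x : RepSpace Q d K) (l : ℕ) :
    radPow Q d K x (l+1) ≤ radPow Q d K x l := by
  induction l with
  | zero => rw [radPow_zero]; exact le_top
  | succ l ih =>
    have h : ∀ k, ⨆ a, (radPow Q d K x k).map (arrowMap Q d K x a) = radPow Q d K x (k+1) :=
      fun k => (radPow_succ Q d K x k).symm
    refine le_trans (h (l+1)).symm.le (le_trans ?_ (h l).le)
    exact iSup_mono fun a => Submodule.map_mono ih

lemma radPow_anti (x : RepSpace Q d K) : Antitone (radPow Q d K x) :=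
  antitone_nat_of_succ_le (radPow_anti_succ Q d K x)

lemma radPow_graded (x : RepSpace Q d K) (l : ℕ) (i : Fin Q.n) :
    (radPow Q d K x l).map (proj Q d K i) ≤ radPow Q d K x l := by
  cases l with
  | zero => rw [radPow_zero]; exact le_top
  | succ l =>
    rw [radPow_succ, Submodule.map_iSup]
    refine iSup_le fun a => ?_
    rintro _ ⟨_, ⟨v, hv, rfl⟩, rfl⟩
    rw [proj_arrow]
    split_ifs
    · exact (le_iSup (fun a => (radPow Q d K x l).map (arrowMap Q d K x a)) a) ⟨v, hv, rfl⟩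
    · exact Submodule.zero_mem _

lemma arrow_radPow (x : RepSpace Q d K) (l : ℕ) (a : Fin Q.numArrows) :
    (radPow Q d K x l).map (arrowMap Q d K x a) ≤ radPow Q d K x (l+1) := by
  rw [radPow_succ]
  exact (le_iSup (fun a => (radPow Q d K x l).map (arrowMap Q d K x a)) a)

lemma trunc_iff (L : ℕ) (x : RepSpace Q d K) :
    x ∈ TruncRepVar Q d K L ↔ radPow Q d K x (L+1) = ⊥ := by
  simp only [TruncRepVar, radPow, iSup_eq_bot, LinearMap.range_eq_bot, Subtype.forall]
  rfl

/-- The filtration at vertex `i`. -/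
noncomputable def Uf (x : RepSpace Q d K) (i : Fin Q.n) (l : ℕ) : Submodule K (Carrier Q d K) :=
  (radPow Q d K x l).map (proj Q d K i)

/-- The components of the target filtration. -/
noncomputable def Tc (x : RepSpace Q d K) (i : Fin Q.n) (l : ℕ) (a : Fin Q.numArrows) :
    Submodule K (Carrier Q d K) :=
  if Q.src a = i then (radPow Q d K x (l+1)).map (proj Q d K (Q.tgt a)) else ⊥

/-- The target filtration. -/
noncomputable def Tf (x : RepSpace Q d K) (i : Fin Q.n) (l : ℕ) :
    Submodule K (Fin Q.numArrows → Carrier Q d K) :=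
  Submodule.pi Set.univ (Tc Q d K x i l)

lemma finrank_Tf (x : RepSpace Q d K) (i : Fin Q.n) (l : ℕ) :
    Module.finrank K (Tf Q d K x i l) =
      ∑ a ∈ Finset.univ.filter (fun a => Q.src a = i),
        vdim Q d K (radPow Q d K x (l+1)) (Q.tgt a) := by
  rw [Tf, finrank_submodule_pi, Finset.sum_filter]
  refine Finset.sum_congr rfl fun a _ => ?_
  by_cases h : Q.src a = i
  · rw [Tc, if_pos h, if_pos h]; rfl
  · rw [Tc, if_neg h, if_neg h]; simp

lemma mem_Tf (x : RepSpace Q d K) (i : Fin Q.n) (l : ℕ) (τ) :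
    τ ∈ Tf Q d K x i l ↔ ∀ a, τ a ∈ Tc Q d K x i l a :=
  ⟨fun h a => h a trivial, fun h a _ => h a⟩

lemma Uf_anti (x : RepSpace Q d K) (i : Fin Q.n) : Antitone (Uf Q d K x i) :=
  fun _ _ h => Submodule.map_mono (radPow_anti Q d K x h)

lemma Tf_anti (x : RepSpace Q d K) (i : Fin Q.n) : Antitone (Tf Q d K x i) := by
  intro l m h τ hτ
  rw [mem_Tf] at hτ ⊢
  intro a
  have := hτ a
  unfold Tc at this ⊢
  split_ifs at this ⊢
  · exact Submodule.map_mono (radPow_anti Q d K x (Nat.succ_le_succ h)) this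
  · exact this

/-- All arrows at once. -/
noncomputable def Psi (x : RepSpace Q d K) :
    Carrier Q d K →ₗ[K] (Fin Q.numArrows → Carrier Q d K) :=
  LinearMap.pi (fun a => arrowMap Q d K x a)

lemma soc_eq (x : RepSpace Q d K) (i : Fin Q.n) :
    (socPow Q d K x 0).map (proj Q d K i) = LinearMap.ker (Psi Q d K x) ⊓ Uf Q d K x i 0 := by
  have hs : ∀ v, v ∈ socPow Q d K x 0 ↔ ∀ a, arrowMap Q d K x a v = 0 := by
    intro v; simp [socPow]
  have hk : ∀ v, v ∈ LinearMap.ker (Psi Q d K x) ↔ ∀ a, arrowMap Q d K x a v = 0 := by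
    intro v; simp [Psi, funext_iff]
  ext v
  constructor
  · rintro ⟨u, hu, rfl⟩
    refine ⟨(hk _).2 fun a => ?_, ⟨u, by rw [radPow_zero]; trivial, rfl⟩⟩
    rw [arrow_proj]
    split_ifs
    · exact (hs u).1 hu a
    · rfl
  · rintro ⟨hv, u, _, rfl⟩
    refine ⟨proj Q d K i u, (hs _).2 ((hk _).1 hv), ?_⟩
    rw [proj_proj, if_pos rfl]

lemma Psi_map (x : RepSpace Q d K) (i : Fin Q.n) (l : ℕ) :
    (Uf Q d K x i l).map (Psi Q d K x) ≤ Tf Q d K x i l := by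
  rintro _ ⟨_, ⟨v, hv, rfl⟩, rfl⟩
  rw [mem_Tf]
  intro a
  simp only [Psi, LinearMap.pi_apply, arrow_proj]
  unfold Tc
  split_ifs
  · refine ⟨arrowMap Q d K x a v, arrow_radPow Q d K x l a ⟨v, hv, rfl⟩, ?_⟩
    rw [proj_arrow, if_pos rfl]
  · exact Submodule.zero_mem _

lemma lower (x : RepSpace Q d K) (i : Fin Q.n) (m : ℕ) :
    vdim Q d K (radPow Q d K x m) i ≤ vdim Q d K (socPow Q d K x 0) i +
      ∑ a ∈ Finset.univ.filter (fun a => Q.src a = i),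
        vdim Q d K (radPow Q d K x (m+1)) (Q.tgt a) := by
  rw [← finrank_Tf]
  have h1 := LinearMap.finrank_range_add_finrank_ker
    ((Psi Q d K x).domRestrict (Uf Q d K x i m))
  rw [finrank_ker_domRestrict] at h1
  have h2 : Module.finrank K (LinearMap.range ((Psi Q d K x).domRestrict (Uf Q d K x i m))) ≤
      Module.finrank K (Tf Q d K x i m) := by
    apply Submodule.finrank_mono
    rintro _ ⟨v, rfl⟩
    exact Psi_map Q d K x i m ⟨v, v.2, rfl⟩
  have h3 : Module.finrank K (LinearMap.ker (Psi Q d K x) ⊓ Uf Q d K x i m :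
      Submodule K (Carrier Q d K)) ≤ vdim Q d K (socPow Q d K x 0) i := by
    unfold vdim
    rw [soc_eq]
    apply Submodule.finrank_mono
    exact inf_le_inf_left _ (Uf_anti Q d K x i (Nat.zero_le m))
  have h4 : vdim Q d K (radPow Q d K x m) i = Module.finrank K (Uf Q d K x i m) := rfl
  omega

lemma upper [Infinite K] (L : ℕ) (x : RepSpace Q d K) (hx : x ∈ TruncRepVar Q d K L)
    (i : Fin Q.n) :
    ∃ y : RepSpace Q d K, (∀ l, radPow Q d K y l = radPow Q d K x l) ∧
      ∃ m, m ≤ L ∧ vdim Q d K (socPow Q d K y 0) i +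
        ∑ a ∈ Finset.univ.filter (fun a => Q.src a = i),
          vdim Q d K (radPow Q d K x (m+1)) (Q.tgt a) ≤ vdim Q d K (radPow Q d K x m) i := by
  rw [trunc_iff] at hx
  have hTL : Tf Q d K x i L = ⊥ := by
    rw [Submodule.eq_bot_iff]
    intro τ hτ
    funext a
    have := (mem_Tf Q d K x i L τ).1 hτ a
    unfold Tc at this
    rw [hx] at this
    split_ifs at this <;> simpa using this
  obtain ⟨ψ, hψ, m, hm, hdim⟩ := filtered_map (Uf Q d K x i) (Tf Q d K x i)
    (Uf_anti Q d K x i) (Tf_anti Q d K x i) L hTL L le_rfl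
  rw [Nat.sub_self] at hψ hdim
  have hψ' : ∀ l, l ≤ L → ∀ v ∈ radPow Q d K x l, ψ (proj Q d K i v) ∈ Tf Q d K x i l :=
    fun l hl v hv => hψ l (Nat.zero_le _) hl ⟨_, ⟨v, hv, rfl⟩, rfl⟩
  have htop : ∀ v, v ∈ radPow Q d K x 0 := by intro v; rw [radPow_zero]; trivial
  obtain ⟨z, hz⟩ := exists_rep Q d K
    (fun a => LinearMap.proj a ∘ₗ ψ ∘ₗ proj Q d K i)
    (by
      intro a v
      have h1 := (mem_Tf Q d K x i 0 _).1 (hψ' 0 (Nat.zero_le _) v (htop v)) a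
      simp only [LinearMap.comp_apply, LinearMap.proj_apply]
      unfold Tc at h1
      split_ifs at h1
      · obtain ⟨u, _, hu⟩ := h1
        rw [← hu, proj_proj, if_pos rfl]
      · rw [(Submodule.mem_bot K).1 h1, map_zero])
    (by
      intro a v
      simp only [LinearMap.comp_apply, LinearMap.proj_apply, proj_proj]
      split_ifs with h
      · rw [h]
      · have h1 := (mem_Tf Q d K x i 0 _).1 (hψ' 0 (Nat.zero_le _) v (htop v)) a
        unfold Tc at h1
        rw [if_neg (fun h' => h h'.symm)] at h1
        rw [(Submodule.mem_bot K).1 h1, map_zero]; rfl)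
  have hzF : ∀ l, ∀ a, (radPow Q d K x l).map (arrowMap Q d K z a) ≤ radPow Q d K x (l+1) := by
    rintro l a _ ⟨v, hv, rfl⟩
    rw [hz]
    simp only [LinearMap.comp_apply, LinearMap.proj_apply]
    by_cases hl : l ≤ L
    · have h1 := (mem_Tf Q d K x i l _).1 (hψ' l hl v hv) a
      unfold Tc at h1
      split_ifs at h1
      · exact radPow_graded Q d K x (l+1) _ h1
      · rw [(Submodule.mem_bot K).1 h1]; exact Submodule.zero_mem _
    · have : v = 0 := by
        have h1 := radPow_anti Q d K x (by omega : L + 1 ≤ l) hv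
        rw [hx] at h1
        simpa using h1
      subst this
      simp
  -- the bad parameters
  have hb1 : ∀ l, {t : K | ¬ ⨆ a, (radPow Q d K x l).map
      (arrowMap Q d K x a + t • arrowMap Q d K z a) = radPow Q d K x (l+1)}.Finite :=
    fun l => generic_span _ _ _ _ (radPow_succ Q d K x l).symm (hzF l)
  have hb2 := generic_ker ((Psi Q d K z).domRestrict (Uf Q d K x i 0))
    ((Psi Q d K x).domRestrict (Uf Q d K x i 0))
  have hbad : ((⋃ l ∈ Finset.range (L+1), {t : K | ¬ ⨆ a, (radPow Q d K x l).map
      (arrowMap Q d K x a + t • arrowMap Q d K z a) = radPow Q d K x (l+1)}) ∪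
      ((fun s : K => s⁻¹) '' {t : K | ¬ Module.finrank K (LinearMap.ker
        ((Psi Q d K z).domRestrict (Uf Q d K x i 0) +
          t • (Psi Q d K x).domRestrict (Uf Q d K x i 0))) ≤
        Module.finrank K (LinearMap.ker ((Psi Q d K z).domRestrict (Uf Q d K x i 0)))} ∪
        {0})).Finite :=
    (Set.Finite.biUnion (Finset.finite_toSet _) (fun l _ => hb1 l)).union
      ((hb2.image _).union (Set.finite_singleton 0))
  obtain ⟨t, ht⟩ := hbad.exists_notMem
  simp only [Set.mem_union, not_or] at ht
  obtain ⟨ht1, ht2, ht0⟩ := ht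
  have ht0 : t ≠ 0 := ht0
  have hspan : ∀ l, l ≤ L → ⨆ a, (radPow Q d K x l).map
      (arrowMap Q d K x a + t • arrowMap Q d K z a) = radPow Q d K x (l+1) := by
    intro l hl
    by_contra hcon
    exact ht1 (Set.mem_biUnion (Finset.mem_coe.2 (Finset.mem_range.2 (by omega))) hcon)
  have hker : Module.finrank K (LinearMap.ker
        ((Psi Q d K z).domRestrict (Uf Q d K x i 0) +
          t⁻¹ • (Psi Q d K x).domRestrict (Uf Q d K x i 0))) ≤
        Module.finrank K (LinearMap.ker ((Psi Q d K z).domRestrict (Uf Q d K x i 0))) := by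
    by_contra hcon
    exact ht2 ⟨t⁻¹, hcon, inv_inv t⟩
  have hrad : ∀ l, radPow Q d K (x + t • z) l = radPow Q d K x l := by
    intro l
    induction l with
    | zero => rw [radPow_zero, radPow_zero]
    | succ l ih =>
      rw [radPow_succ, ih]
      simp only [arrow_lin]
      by_cases hl : l ≤ L
      · exact hspan l hl
      · have h1 : radPow Q d K x l = ⊥ :=
          le_bot_iff.1 (hx ▸ radPow_anti Q d K x (by omega : L + 1 ≤ l))
        have h2 : radPow Q d K x (l+1) = ⊥ :=
          le_bot_iff.1 (hx ▸ radPow_anti Q d K x (by omega : L + 1 ≤ l + 1))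
        rw [h1, h2]; simp
  refine ⟨x + t • z, hrad, m, hm, ?_⟩
  rw [← finrank_Tf]
  refine le_trans (Nat.add_le_add_right ?_ _) hdim
  unfold vdim
  rw [soc_eq]
  have hU0 : Uf Q d K (x + t • z) i 0 = Uf Q d K x i 0 := by
    unfold Uf; rw [hrad]
  rw [hU0]
  have hle1 : LinearMap.ker (Psi Q d K (x + t • z)) ⊓ Uf Q d K x i 0 ≤
      LinearMap.ker (Psi Q d K z + t⁻¹ • Psi Q d K x) ⊓ Uf Q d K x i 0 := by
    refine inf_le_inf_right _ ?_
    intro v hv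
    have hv' : ∀ a, arrowMap Q d K x a v + t • arrowMap Q d K z a v = 0 := by
      intro a
      have := congrFun (LinearMap.mem_ker.1 hv) a
      simpa [Psi, arrow_lin] using this
    rw [LinearMap.mem_ker]
    funext a
    have h3 : arrowMap Q d K z a v + t⁻¹ • arrowMap Q d K x a v =
        t⁻¹ • (arrowMap Q d K x a v + t • arrowMap Q d K z a v) := by
      rw [smul_add, smul_smul, inv_mul_cancel₀ ht0, one_smul, add_comm]
    rw [hv' a, smul_zero] at h3
    simpa [Psi] using h3
  have e1 : (Psi Q d K z).domRestrict (Uf Q d K x i 0) +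
      t⁻¹ • (Psi Q d K x).domRestrict (Uf Q d K x i 0) =
      (Psi Q d K z + t⁻¹ • Psi Q d K x).domRestrict (Uf Q d K x i 0) := rfl
  rw [e1, finrank_ker_domRestrict, finrank_ker_domRestrict] at hker
  refine le_trans (Submodule.finrank_mono hle1) (le_trans hker ?_)
  apply Submodule.finrank_mono
  rintro v ⟨hv, u, hu, rfl⟩
  refine ⟨?_, u, hu, rfl⟩
  change ψ (proj Q d K i u) = 0
  funext a
  have h5 := congrFun (LinearMap.mem_ker.1 hv) a
  simp only [Psi, LinearMap.pi_apply, hz, LinearMap.comp_apply, LinearMap.proj_apply,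
    proj_proj, if_true] at h5
  exact h5

lemma sum_formula (L : ℕ) (x : RepSpace Q d K) (hx : x ∈ TruncRepVar Q d K L)
    (S : Fin (L+1) → Fin Q.n → ℕ) (hS : radLayering Q d K L x = S) (i : Fin Q.n)
    (m : ℕ) (hm : m ≤ L) :
    ∑ l ∈ Finset.Icc m L, (seqZ Q L S l i - outflowZ Q (seqZ Q L S (l+1)) i) =
      (vdim Q d K (radPow Q d K x m) i : ℤ) -
      ∑ a ∈ Finset.univ.filter (fun a => Q.src a = i),
        (vdim Q d K (radPow Q d K x (m+1)) (Q.tgt a) : ℤ) := by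
  rw [trunc_iff] at hx
  have hbot : ∀ l, L + 1 ≤ l → ∀ j, vdim Q d K (radPow Q d K x l) j = 0 := by
    intro l hl j
    have : radPow Q d K x l = ⊥ := le_bot_iff.1 (hx ▸ radPow_anti Q d K x hl)
    simp [vdim, this]
  have hseq : ∀ l j, seqZ Q L S l j = (vdim Q d K (radPow Q d K x l) j : ℤ) -
      vdim Q d K (radPow Q d K x (l+1)) j := by
    intro l j
    unfold seqZ
    split_ifs with h
    · rw [← hS]
      simp only [radLayering]
      rw [Nat.cast_sub]
      exact Submodule.finrank_mono (Submodule.map_mono (radPow_anti_succ Q d K x l))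
    · rw [hbot l (by omega), hbot (l+1) (by omega)]; simp
  set G : ℕ → ℤ := fun m => (vdim Q d K (radPow Q d K x m) i : ℤ) -
      ∑ a ∈ Finset.univ.filter (fun a => Q.src a = i),
        (vdim Q d K (radPow Q d K x (m+1)) (Q.tgt a) : ℤ) with hG
  have hterm : ∀ l, seqZ Q L S l i - outflowZ Q (seqZ Q L S (l+1)) i = G l - G (l+1) := by
    intro l
    simp only [hG, outflowZ, hseq, Finset.sum_sub_distrib]
    ring
  have hGL : G (L+1) = 0 := by
    simp only [hG]
    rw [hbot (L+1) le_rfl, Finset.sum_eq_zero]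
    · simp
    · intro a _; rw [hbot (L+1+1) (by omega)]; rfl
  simp only [hterm]
  change _ = G m
  rw [← Finset.Ico_add_one_right_eq_Icc, Finset.sum_Ico_eq_sub _ (by omega),
    Finset.sum_range_sub', Finset.sum_range_sub', hGL]
  ring

lemma dominates_zero {n L : ℕ} {S S' : Fin (L+1) → Fin n → ℕ} (h : dominates S S') (i : Fin n) :
    S 0 i ≤ S' 0 i := by
  have h1 := h 0 i
  have h2 : (Finset.univ.filter (fun j : Fin (L+1) => j ≤ 0)) = {0} := by
    ext j; simp
  rw [h2, Finset.sum_singleton, Finset.sum_singleton] at h1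
  exact h1

end QV
end GenSocAux

open QuiverData in
/-- For a truncated path algebra and a realizable semisimple sequence
`S` with generic socle layering `S*`, the generic socle `S*_0` has dimension vector
`dim S*_0 = sup { ∑_{l=L−j}^{L} (dim S_l − (dim S_{l+1})·B) : 0 ≤ j ≤ L }` (componentwise,
`B` the transpose of the adjacency matrix, `S_{L+1} = 0`). -/
theorem statement_11 (K : Type) [Field K] [IsAlgClosed K]
    (Q : QuiverData) (L : ℕ) (hL : 0 < L)
    (d : Fin Q.n → ℕ) (S : Fin (L+1) → Fin Q.n → ℕ) (hS : hasDimVec S d)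
    (Sstar : Fin (L+1) → Fin Q.n → ℕ)
    (hgen : GenSoc Q d K L
      {x | x ∈ TruncRepVar Q d K L ∧ radLayering Q d K L x = S} Sstar) :
    ∀ i : Fin Q.n, (Sstar 0 i : ℤ) =
      (Finset.range (L+1)).sup'
        (Finset.nonempty_range_iff.mpr (Nat.succ_ne_zero L))
        (fun j => ∑ l ∈ Finset.Icc (L - j) L,
          (seqZ Q L S l i - outflowZ Q (seqZ Q L S (l+1)) i)) := by
  classical
  intro i
  obtain ⟨hmin, x, ⟨hxT, hxS⟩, hxs⟩ := hgen
  have hs0 : ∀ y : RepSpace Q d K, socLayering Q d K L y 0 i =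
      vdim Q d K (socPow Q d K y 0) i := by
    intro y; simp [socLayering]
  have hx0 : Sstar 0 i = vdim Q d K (socPow Q d K x 0) i := by rw [← hxs, hs0]
  apply le_antisymm
  · haveI : Infinite K := IsAlgClosed.instInfinite
    obtain ⟨y, hy, m, hm, hle⟩ := GenSocAux.upper Q d K L x hxT i
    have hyW : y ∈ {x | x ∈ TruncRepVar Q d K L ∧ radLayering Q d K L x = S} := by
      refine ⟨?_, ?_⟩
      · rw [GenSocAux.trunc_iff, hy, ← GenSocAux.trunc_iff]; exact hxT
      · rw [← hxS]
        funext l j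
        simp only [radLayering, hy]
    have h1 := GenSocAux.dominates_zero (hmin y hyW) i
    rw [hs0] at h1
    refine le_trans ?_ (Finset.le_sup' _ (Finset.mem_range.2 (by omega : L - m < L + 1)))
    rw [GenSocAux.sum_formula Q d K L x hxT S hxS i _ (by omega)]
    rw [show L - (L - m) = m by omega]
    have h2 : Sstar 0 i + ∑ a ∈ Finset.univ.filter (fun a => Q.src a = i),
          vdim Q d K (radPow Q d K x (m+1)) (Q.tgt a) ≤ vdim Q d K (radPow Q d K x m) i := by
      omega
    have h3 : ((Sstar 0 i : ℤ) + ∑ a ∈ Finset.univ.filter (fun a => Q.src a = i),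
          (vdim Q d K (radPow Q d K x (m+1)) (Q.tgt a) : ℤ)) ≤
          vdim Q d K (radPow Q d K x m) i := by
      exact_mod_cast h2
    linarith
  · apply Finset.sup'_le
    intro j hj
    rw [GenSocAux.sum_formula Q d K L x hxT S hxS i _ (by omega)]
    have h2 := GenSocAux.lower Q d K x i (L - j)
    rw [← hx0] at h2
    have h3 : (vdim Q d K (radPow Q d K x (L - j)) i : ℤ) ≤
        Sstar 0 i + ∑ a ∈ Finset.univ.filter (fun a => Q.src a = i),
          (vdim Q d K (radPow Q d K x (L - j + 1)) (Q.tgt a) : ℤ) := by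
      exact_mod_cast h2
    linarith
end
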